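/- For integers n ≥ ω ≥ 0 of opposite parity, with k = (n + ω − 1)/2 and l = (n − ω + 1)/2, the invariant g = φ ∘ f^X of the curve c_{ω,n} equals g(c_{ω,n}) = k(l + k − 1) + l(k − l + 1) = (1/2)n² + (ω − 1)n + (1/2)(1 − ω²). -/

import Mathlib

open Set
open scoped ENNReal

noncomputable section

namespace CurvePaper


/-- The determinant of two vectors in the plane `ℝ² ≅ ℂ`. -/
def det2 (u v : ℂ) : ℝ := u.re * v.im - u.im * v.re

/-- The determinant of three vectors in `ℝ³`. -/
def det3 (a b c : EuclideanSpace ℝ (Fin 3)) : ℝ :=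
  a 0 * (b 1 * c 2 - b 2 * c 1) - a 1 * (b 0 * c 2 - b 2 * c 0) + a 2 * (b 0 * c 1 - b 1 * c 0)

/-- The homomorphism `φ : 𝕏 → ℤ`, `X_{a,b} ↦ a - b`, on the free abelian group `𝕏`
with basis `{X_{a,b} : a b ∈ ℤ}`. -/
def phi : FreeAbelianGroup (ℤ × ℤ) →+ ℤ :=
  FreeAbelianGroup.lift fun p : ℤ × ℤ => p.1 - p.2

/-! ### Planar curves -/

/-- A closed planar curve: a smooth immersion of the circle `ℝ/ℤ` into the plane. -/
structure PlanarCurve : Type where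
  toFun : ℝ → ℂ
  periodic : Function.Periodic toFun 1
  smooth : ContDiff ℝ (⊤ : ℕ∞) toFun
  immersion : ∀ t : ℝ, deriv toFun t ≠ 0

namespace PlanarCurve

/-- The number of parameters in one period mapping to a given point. -/
def multF (f : ℝ → ℂ) (p : ℂ) : ℕ := Set.ncard {t ∈ Set.Ico (0:ℝ) 1 | f t = p}

/-- All self-intersections of `f` at the point `p` are transverse. -/
def TransverseF (f : ℝ → ℂ) (p : ℂ) : Prop :=
  ∀ s ∈ Set.Ico (0:ℝ) 1, ∀ t ∈ Set.Ico (0:ℝ) 1, s ≠ t → f s = p → f t = p →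
    det2 (deriv f s) (deriv f t) ≠ 0

/-- The set of self-intersection points of a parametrized curve. -/
def crossingSetF (f : ℝ → ℂ) : Set ℂ := {p : ℂ | 2 ≤ multF f p}

/-- A parametrized curve is stable if its only self-intersections are finitely many
transverse double points. -/
def StableF (f : ℝ → ℂ) : Prop :=
  (crossingSetF f).Finite ∧ ∀ p : ℂ, multF f p ≤ 2 ∧ (multF f p = 2 → TransverseF f p)

/-- A planar curve is stable if its only self-intersections are transverse double points. -/
def Stable (c : PlanarCurve) : Prop := StableF c.toFun

/-- The number of crossings (self-intersection points) of a planar curve. -/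
def crossings (c : PlanarCurve) : ℕ := (crossingSetF c.toFun).ncard

/-- `c` has Whitney winding number `ω`: the degree of the normalized derivative map
`S¹ → S¹`, expressed via a continuous lift of its angle. -/
def HasWhitney (c : PlanarCurve) (ω : ℤ) : Prop :=
  ∃ θ : ℝ → ℝ, Continuous θ ∧
    (∀ t : ℝ, deriv c.toFun t = (‖deriv c.toFun t‖ : ℂ) * Complex.exp ((θ t : ℂ) * Complex.I)) ∧
    θ 1 - θ 0 = 2 * Real.pi * (ω : ℝ)

/-- `H` is a regular homotopy between parametrized curves `f` and `g`:
a continuously varying family of immersed closed curves. -/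
def IsRegHomotopy (f g : ℝ → ℂ) (H : ℝ → ℝ → ℂ) : Prop :=
  (Continuous fun q : ℝ × ℝ => H q.1 q.2) ∧
  (Continuous fun q : ℝ × ℝ => deriv (H q.1) q.2) ∧
  (∀ s : ℝ, Function.Periodic (H s) 1) ∧
  (∀ s : ℝ, ContDiff ℝ (⊤ : ℕ∞) (H s)) ∧
  (∀ s t : ℝ, deriv (H s) t ≠ 0) ∧
  H 0 = f ∧ H 1 = g

/-- Two planar curves are regularly homotopic. -/
def RegularlyHomotopic (c c' : PlanarCurve) : Prop :=
  ∃ H, IsRegHomotopy c.toFun c'.toFun H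

/-- Two planar curves are homotopic through *stable* immersed curves. -/
def StablyHomotopic (c c' : PlanarCurve) : Prop :=
  ∃ H, IsRegHomotopy c.toFun c'.toFun H ∧ ∀ s ∈ Set.Icc (0:ℝ) 1, StableF (H s)

/-- A point of a curve which is either a regular point or a transverse double point. -/
def StablePointF (f : ℝ → ℂ) (p : ℂ) : Prop :=
  multF f p ≤ 1 ∨ (multF f p = 2 ∧ TransverseF f p)

/-- A curve exhibiting a single `J`-type singularity (a first-order tangency of two
strands), all other points being stable. -/
def JSingF (f : ℝ → ℂ) : Prop :=
  ∃ p : ℂ, multF f p = 2 ∧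
    (∀ s ∈ Set.Ico (0:ℝ) 1, ∀ t ∈ Set.Ico (0:ℝ) 1, s ≠ t → f s = p → f t = p →
      ∃ r : ℝ, r ≠ 0 ∧ deriv f t = (r : ℂ) * deriv f s ∧
        det2 (deriv f s) (iteratedDeriv 2 f s) * ‖deriv f t‖ ^ 3 ≠
          (if 0 < r then 1 else -1) * det2 (deriv f t) (iteratedDeriv 2 f t) * ‖deriv f s‖ ^ 3) ∧
    (∀ q : ℂ, q ≠ p → StablePointF f q) ∧ (crossingSetF f).Finite

/-- A curve exhibiting a single `S`-type singularity (three strands meeting at one point,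
pairwise transversally), all other points being stable. -/
def SSingF (f : ℝ → ℂ) : Prop :=
  ∃ p : ℂ, multF f p = 3 ∧ TransverseF f p ∧
    (∀ q : ℂ, q ≠ p → StablePointF f q) ∧ (crossingSetF f).Finite

/-- A `J` move: a regular homotopy between stable curves passing through exactly one
singular moment, of `J`-type. -/
def JMove (c c' : PlanarCurve) : Prop :=
  c.Stable ∧ c'.Stable ∧ ∃ H, IsRegHomotopy c.toFun c'.toFun H ∧
    ∃ s₀ ∈ Set.Ioo (0:ℝ) 1, (∀ s ∈ Set.Icc (0:ℝ) 1, s ≠ s₀ → StableF (H s)) ∧ JSingF (H s₀)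

/-- An `S` move: a regular homotopy between stable curves passing through exactly one
singular moment, of `S`-type. -/
def SMove (c c' : PlanarCurve) : Prop :=
  c.Stable ∧ c'.Stable ∧ ∃ H, IsRegHomotopy c.toFun c'.toFun H ∧
    ∃ s₀ ∈ Set.Ioo (0:ℝ) 1, (∀ s ∈ Set.Icc (0:ℝ) 1, s ≠ s₀ → StableF (H s)) ∧ SSingF (H s₀)

/-- A basic move is a `J` move or an `S` move. -/
def BasicMove (c c' : PlanarCurve) : Prop := JMove c c' ∨ SMove c c'

/-- An increasing `J` move adds two crossings. -/
def IncreasingJMove (c c' : PlanarCurve) : Prop :=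
  JMove c c' ∧ c'.crossings = c.crossings + 2

/-- A decreasing `J` move removes two crossings. -/
def DecreasingJMove (c c' : PlanarCurve) : Prop :=
  JMove c c' ∧ c.crossings = c'.crossings + 2

/-- A `Z` move: the composite of an increasing `J` move, an `S` move and a decreasing
`J` move (sliding an empty 1-gon past a transverse strand). -/
def ZMove (c c' : PlanarCurve) : Prop :=
  ∃ c₁ c₂, IncreasingJMove c c₁ ∧ SMove c₁ c₂ ∧ DecreasingJMove c₂ c'

/-- A sequence of `k` basic moves leading from `c` to `c'` (allowing an initial
deformation through stable curves). -/
def ChainFromTo (c c' : PlanarCurve) (seq : ℕ → PlanarCurve) (k : ℕ) : Prop :=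
  StablyHomotopic c (seq 0) ∧ seq k = c' ∧ ∀ i < k, BasicMove (seq i) (seq (i+1))

/-- The distance between two curves: the minimal number of basic moves needed to pass
from `c` to `c'` (`⊤` if they are not regularly homotopic). -/
def dist (c c' : PlanarCurve) : ℕ∞ :=
  sInf {m : ℕ∞ | ∃ k : ℕ, m = (k : ℕ∞) ∧ ∃ seq : ℕ → PlanarCurve, ChainFromTo c c' seq k}

/-- The diameter of a set of curves. -/
def diam (A : Set PlanarCurve) : ℕ∞ := ⨆ c ∈ A, ⨆ c' ∈ A, dist c c'

/-- `B^ω_n`: the set of all stable planar curves with Whitney number `ω` and at most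
`n` crossings. -/
def B (ω : ℤ) (n : ℕ) : Set PlanarCurve :=
  {c : PlanarCurve | c.Stable ∧ c.HasWhitney ω ∧ c.crossings ≤ n}

/-- A step of the algorithm: an `S` move, a decreasing `J` move, or a `Z` move whose two
intermediate curves have at most `N` crossings; `w` is the number of basic moves used. -/
def AlgStep (N : ℕ) (c c' : PlanarCurve) (w : ℕ) : Prop :=
  (SMove c c' ∧ w = 1) ∨ (DecreasingJMove c c' ∧ w = 1) ∨
  ((∃ c₁ c₂, IncreasingJMove c c₁ ∧ SMove c₁ c₂ ∧ DecreasingJMove c₂ c' ∧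
      c₁.crossings ≤ N ∧ c₂.crossings ≤ N) ∧ w = 3)

/-! #### The invariant `f^X` -/

/-- The set of parameter pairs (in one period) realizing the double points of a curve. -/
def crossingPairsF (f : ℝ → ℂ) : Set (ℝ × ℝ) :=
  {q : ℝ × ℝ | q.1 ∈ Set.Ico (0:ℝ) 1 ∧ q.2 ∈ Set.Ico (0:ℝ) 1 ∧ q.1 < q.2 ∧ f q.1 = f q.2}

/-- The sign `i(v) ∈ {1,-1}` of a double point visited first at time `s` and then at
time `t`: `1` iff the tangents, in the order visited, form a positive basis. -/
def crossSign (f : ℝ → ℂ) (s t : ℝ) : ℤ :=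
  if 0 < det2 (deriv f s) (deriv f t) then 1 else -1

/-- The index `i(e)` of the subarc `e` of `f` on the parameter interval `(α, β)`:
the sum of the signs of the double points of `e`. -/
def arcIndex (f : ℝ → ℂ) (α β : ℝ) : ℤ :=
  ∑ᶠ q ∈ {q : ℝ × ℝ | q.1 ∈ Set.Ioo α β ∧ q.2 ∈ Set.Ioo α β ∧ q.1 < q.2 ∧ f q.1 = f q.2},
    crossSign f q.1 q.2

/-- The order one invariant `f^X(c) = ∑_v X_{a(v),b(v)} ∈ 𝕏`, where for each double
point `v` the two arcs of `c` based at `v` are ordered by the orientation of the tangents. -/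
def fX (c : PlanarCurve) : FreeAbelianGroup (ℤ × ℤ) :=
  ∑ᶠ q ∈ crossingPairsF c.toFun,
    if 0 < det2 (deriv c.toFun q.1) (deriv c.toFun q.2) then
      FreeAbelianGroup.of (arcIndex c.toFun q.1 q.2, arcIndex c.toFun q.2 (q.1 + 1))
    else
      FreeAbelianGroup.of (arcIndex c.toFun q.2 (q.1 + 1), arcIndex c.toFun q.1 q.2)

/-- The integer valued invariant `g = φ ∘ f^X`. -/
def g (c : PlanarCurve) : ℤ := phi (fX c)

/-! #### The standard curves `δ_ω` -/

/-- An explicit stable curve with winding number `m ≥ 1` and `m - 1` (inward) loops. -/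
def deltaFunPos (m : ℕ) : ℝ → ℂ := fun t =>
  Complex.exp (((2 * Real.pi * (m : ℝ) * t : ℝ) : ℂ) * Complex.I) +
    ((2 * (m : ℝ) / 3 : ℝ) : ℂ) * Complex.exp (((2 * Real.pi * t : ℝ) : ℂ) * Complex.I)

/-- The standard planar curve `δ_ω` with Whitney number `ω` and `||ω|-1|` crossings:
for `ω = 0` a figure eight, and for `ω ≠ 0` a round circle with `|ω| - 1` small loops. -/
def deltaFun (ω : ℤ) : ℝ → ℂ :=
  if ω = 0 then
    fun t => ((Real.sin (2 * Real.pi * t) : ℝ) : ℂ) + ((Real.sin (4 * Real.pi * t) : ℝ) : ℂ) * Complex.I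
  else if 0 < ω then deltaFunPos ω.toNat
  else fun t => (starRingEnd ℂ) (deltaFunPos (-ω).toNat t)

end PlanarCurve


/-! ### Spherical curves -/


/-- A closed spherical curve: a smooth immersion of the circle `ℝ/ℤ` into the unit
sphere `S² ⊆ ℝ³`. -/
structure SphericalCurve : Type where
  toFun : ℝ → EuclideanSpace ℝ (Fin 3)
  norm_one : ∀ t : ℝ, ‖toFun t‖ = 1
  periodic : Function.Periodic toFun 1
  smooth : ContDiff ℝ (⊤ : ℕ∞) toFun
  immersion : ∀ t : ℝ, deriv toFun t ≠ 0

namespace SphericalCurve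

def multF (f : ℝ → EuclideanSpace ℝ (Fin 3)) (p : EuclideanSpace ℝ (Fin 3)) : ℕ :=
  Set.ncard {t ∈ Set.Ico (0:ℝ) 1 | f t = p}

/-- Transversality of the branches at `p`: tangent vectors at `p` are pairwise
independent, detected by the `3×3` determinant with the base point `p` (the outward
normal of the sphere, fixing its orientation). -/
def TransverseF (f : ℝ → EuclideanSpace ℝ (Fin 3)) (p : EuclideanSpace ℝ (Fin 3)) : Prop :=
  ∀ s ∈ Set.Ico (0:ℝ) 1, ∀ t ∈ Set.Ico (0:ℝ) 1, s ≠ t → f s = p → f t = p →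
    det3 p (deriv f s) (deriv f t) ≠ 0

def crossingSetF (f : ℝ → EuclideanSpace ℝ (Fin 3)) : Set (EuclideanSpace ℝ (Fin 3)) :=
  {p | 2 ≤ multF f p}

def StableF (f : ℝ → EuclideanSpace ℝ (Fin 3)) : Prop :=
  (crossingSetF f).Finite ∧ ∀ p, multF f p ≤ 2 ∧ (multF f p = 2 → TransverseF f p)

def Stable (c : SphericalCurve) : Prop := StableF c.toFun

def crossings (c : SphericalCurve) : ℕ := (crossingSetF c.toFun).ncard

/-- The curve as a map into the sphere as a subtype. -/
def pt (c : SphericalCurve) (t : ℝ) : Metric.sphere (0 : EuclideanSpace ℝ (Fin 3)) 1 :=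
  ⟨c.toFun t, mem_sphere_zero_iff_norm.mpr (c.norm_one t)⟩

/-- The planar curve obtained from `c` by deleting the point `v ∈ S²` not on `c`
(stereographic projection from `v`). -/
def proj (c : SphericalCurve) (v : Metric.sphere (0 : EuclideanSpace ℝ (Fin 3)) 1) :
    ℝ → EuclideanSpace ℝ (Fin 2) :=
  haveI : Fact (Module.finrank ℝ (EuclideanSpace ℝ (Fin 3)) = 2 + 1) := ⟨by simp⟩
  fun t => stereographic' 2 v (c.pt t)

/-- `c` has (spherical) Whitney number `ω ∈ ℤ/2`: the parity of the winding number of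
the planar curve obtained by deleting from `S²` a point in the complement of `c`. -/
def HasWhitney (c : SphericalCurve) (ω : ZMod 2) : Prop :=
  ∃ v : Metric.sphere (0 : EuclideanSpace ℝ (Fin 3)) 1,
    (∀ t : ℝ, c.toFun t ≠ (v : EuclideanSpace ℝ (Fin 3))) ∧
    ∃ (m : ℤ) (θ : ℝ → ℝ), Continuous θ ∧
      (∀ t : ℝ, deriv (c.proj v) t =
        ‖deriv (c.proj v) t‖ •
          ((WithLp.equiv 2 (Fin 2 → ℝ)).symm ![Real.cos (θ t), Real.sin (θ t)])) ∧
      θ 1 - θ 0 = 2 * Real.pi * (m : ℝ) ∧ ω = (m : ZMod 2)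

def IsRegHomotopy (f g : ℝ → EuclideanSpace ℝ (Fin 3))
    (H : ℝ → ℝ → EuclideanSpace ℝ (Fin 3)) : Prop :=
  (Continuous fun q : ℝ × ℝ => H q.1 q.2) ∧
  (Continuous fun q : ℝ × ℝ => deriv (H q.1) q.2) ∧
  (∀ s t : ℝ, ‖H s t‖ = 1) ∧
  (∀ s : ℝ, Function.Periodic (H s) 1) ∧
  (∀ s : ℝ, ContDiff ℝ (⊤ : ℕ∞) (H s)) ∧
  (∀ s t : ℝ, deriv (H s) t ≠ 0) ∧
  H 0 = f ∧ H 1 = g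

def RegularlyHomotopic (c c' : SphericalCurve) : Prop :=
  ∃ H, IsRegHomotopy c.toFun c'.toFun H

def StablyHomotopic (c c' : SphericalCurve) : Prop :=
  ∃ H, IsRegHomotopy c.toFun c'.toFun H ∧ ∀ s ∈ Set.Icc (0:ℝ) 1, StableF (H s)

def StablePointF (f : ℝ → EuclideanSpace ℝ (Fin 3)) (p : EuclideanSpace ℝ (Fin 3)) : Prop :=
  multF f p ≤ 1 ∨ (multF f p = 2 ∧ TransverseF f p)

def JSingF (f : ℝ → EuclideanSpace ℝ (Fin 3)) : Prop :=
  ∃ p : EuclideanSpace ℝ (Fin 3), multF f p = 2 ∧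
    (∀ s ∈ Set.Ico (0:ℝ) 1, ∀ t ∈ Set.Ico (0:ℝ) 1, s ≠ t → f s = p → f t = p →
      ∃ r : ℝ, r ≠ 0 ∧ deriv f t = r • deriv f s ∧
        det3 p (deriv f s) (iteratedDeriv 2 f s) * ‖deriv f t‖ ^ 3 ≠
          (if 0 < r then 1 else -1) * det3 p (deriv f t) (iteratedDeriv 2 f t) * ‖deriv f s‖ ^ 3) ∧
    (∀ q, q ≠ p → StablePointF f q) ∧ (crossingSetF f).Finite

def SSingF (f : ℝ → EuclideanSpace ℝ (Fin 3)) : Prop :=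
  ∃ p : EuclideanSpace ℝ (Fin 3), multF f p = 3 ∧ TransverseF f p ∧
    (∀ q, q ≠ p → StablePointF f q) ∧ (crossingSetF f).Finite

def JMove (c c' : SphericalCurve) : Prop :=
  c.Stable ∧ c'.Stable ∧ ∃ H, IsRegHomotopy c.toFun c'.toFun H ∧
    ∃ s₀ ∈ Set.Ioo (0:ℝ) 1, (∀ s ∈ Set.Icc (0:ℝ) 1, s ≠ s₀ → StableF (H s)) ∧ JSingF (H s₀)

def SMove (c c' : SphericalCurve) : Prop :=
  c.Stable ∧ c'.Stable ∧ ∃ H, IsRegHomotopy c.toFun c'.toFun H ∧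
    ∃ s₀ ∈ Set.Ioo (0:ℝ) 1, (∀ s ∈ Set.Icc (0:ℝ) 1, s ≠ s₀ → StableF (H s)) ∧ SSingF (H s₀)

def BasicMove (c c' : SphericalCurve) : Prop := JMove c c' ∨ SMove c c'

def IncreasingJMove (c c' : SphericalCurve) : Prop :=
  JMove c c' ∧ c'.crossings = c.crossings + 2

def DecreasingJMove (c c' : SphericalCurve) : Prop :=
  JMove c c' ∧ c.crossings = c'.crossings + 2

def ZMove (c c' : SphericalCurve) : Prop :=
  ∃ c₁ c₂, IncreasingJMove c c₁ ∧ SMove c₁ c₂ ∧ DecreasingJMove c₂ c'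

def ChainFromTo (c c' : SphericalCurve) (seq : ℕ → SphericalCurve) (k : ℕ) : Prop :=
  StablyHomotopic c (seq 0) ∧ seq k = c' ∧ ∀ i < k, BasicMove (seq i) (seq (i+1))

def dist (c c' : SphericalCurve) : ℕ∞ :=
  sInf {m : ℕ∞ | ∃ k : ℕ, m = (k : ℕ∞) ∧ ∃ seq : ℕ → SphericalCurve, ChainFromTo c c' seq k}

def diam (A : Set SphericalCurve) : ℕ∞ := ⨆ c ∈ A, ⨆ c' ∈ A, dist c c'

def B (ω : ZMod 2) (n : ℕ) : Set SphericalCurve :=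
  {c : SphericalCurve | c.Stable ∧ c.HasWhitney ω ∧ c.crossings ≤ n}

def AlgStep (N : ℕ) (c c' : SphericalCurve) (w : ℕ) : Prop :=
  (SMove c c' ∧ w = 1) ∨ (DecreasingJMove c c' ∧ w = 1) ∨
  ((∃ c₁ c₂, IncreasingJMove c c₁ ∧ SMove c₁ c₂ ∧ DecreasingJMove c₂ c' ∧
      c₁.crossings ≤ N ∧ c₂.crossings ≤ N) ∧ w = 3)

/-! #### The invariant `f^X` for spherical curves -/

def crossingPairsF (f : ℝ → EuclideanSpace ℝ (Fin 3)) : Set (ℝ × ℝ) :=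
  {q : ℝ × ℝ | q.1 ∈ Set.Ico (0:ℝ) 1 ∧ q.2 ∈ Set.Ico (0:ℝ) 1 ∧ q.1 < q.2 ∧ f q.1 = f q.2}

def crossSign (f : ℝ → EuclideanSpace ℝ (Fin 3)) (s t : ℝ) : ℤ :=
  if 0 < det3 (f s) (deriv f s) (deriv f t) then 1 else -1

def arcIndex (f : ℝ → EuclideanSpace ℝ (Fin 3)) (α β : ℝ) : ℤ :=
  ∑ᶠ q ∈ {q : ℝ × ℝ | q.1 ∈ Set.Ioo α β ∧ q.2 ∈ Set.Ioo α β ∧ q.1 < q.2 ∧ f q.1 = f q.2},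
    crossSign f q.1 q.2

def fX (c : SphericalCurve) : FreeAbelianGroup (ℤ × ℤ) :=
  ∑ᶠ q ∈ crossingPairsF c.toFun,
    if 0 < det3 (c.toFun q.1) (deriv c.toFun q.1) (deriv c.toFun q.2) then
      FreeAbelianGroup.of (arcIndex c.toFun q.1 q.2, arcIndex c.toFun q.2 (q.1 + 1))
    else
      FreeAbelianGroup.of (arcIndex c.toFun q.2 (q.1 + 1), arcIndex c.toFun q.1 q.2)

def g (c : SphericalCurve) : ℤ := phi (fX c)

/-- Inverse stereographic projection `ℂ → S²` from the north pole. -/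
def stereoInv (z : ℂ) : EuclideanSpace ℝ (Fin 3) :=
  (WithLp.equiv 2 (Fin 3 → ℝ)).symm
    ![2 * z.re / (Complex.normSq z + 1), 2 * z.im / (Complex.normSq z + 1),
      (Complex.normSq z - 1) / (Complex.normSq z + 1)]

/-- The standard spherical curves `δ_0` (one crossing) and `δ_1` (embedded):
the images in `S²` of the standard planar curves `δ_0`, `δ_1`. -/
def deltaFun (ω : ZMod 2) : ℝ → EuclideanSpace ℝ (Fin 3) :=
  fun t => stereoInv (PlanarCurve.deltaFun (if ω = 0 then 0 else 1) t)

end SphericalCurve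


/-- The determinant of two vectors in `ℝ × ℝ`. -/
def det2P (u v : ℝ × ℝ) : ℝ := u.1 * v.2 - u.2 * v.1

/-- The closed region bounded by a subset of the plane: the set together with all the
bounded connected components of its complement. -/
def closedRegion (S : Set ℂ) : Set ℂ :=
  S ∪ {p : ℂ | p ∉ S ∧ Bornology.IsBounded (connectedComponentIn Sᶜ p)}

/-!
The curve is written in logarithmic polar coordinates. Its angle makes `k + 1` turns in a period
while its radius grows to `1` and then returns symmetrically, so it meets itself at the times `t`
and `1 - t` whenever the angle at `t < 1 / 2` is a multiple of `π`; this gives `k` nested chords.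
During the part of the period that the curve spends on the unit circle, `l` small outward kinks are
inserted, each of which adds a chord nested inside those `k`. All crossings are positive, so the
indices of the two arcs at a double point are found by counting the chords inside, beside and around
its own chord. Divided by the position, up to the constant `I`, the velocity avoids the negative
real axis except at the middle of each kink, where it crosses that axis clockwise; hence the winding
number is `k + 1 - l`.
-/

/-! ### Curves with positive Gauss diagram -/

section GaussDiagram

open PlanarCurve
open scoped Finset

lemma det2_swap (u v : ℂ) : det2 v u = -det2 u v := by
  unfold det2; ring

lemma periodic_deriv {E : Type*} [NormedAddCommGroup E] [NormedSpace ℝ E] {f : ℝ → E} {c : ℝ}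
    (hf : Function.Periodic f c) : Function.Periodic (deriv f) c := fun x => by
  rw [← deriv_comp_add_const, funext hf]

lemma crossSign_eq_one {f : ℝ → ℂ} {s t : ℝ} (h : 0 < det2 (deriv f s) (deriv f t)) :
    crossSign f s t = 1 := if_pos h

lemma crossSign_swap_eq_neg_one {f : ℝ → ℂ} {s t : ℝ} (h : 0 < det2 (deriv f s) (deriv f t)) :
    crossSign f t s = -1 := by
  rw [crossSign, det2_swap, if_neg (by linarith)]

lemma finsum_mem_image_eq_card_mul {ι α : Type*} [Fintype ι] {p : ι → Prop} [DecidablePred p]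
    {r : ι → α} (hr : InjOn r {i | p i}) {F : α → ℤ} {c : ℤ} (hF : ∀ i, p i → F (r i) = c) :
    ∑ᶠ x ∈ r '' {i | p i}, F x = #{i | p i} * c := by
  have hcoe : {i | p i} = (({i | p i} : Finset ι) : Set ι) := by simp
  rw [finsum_mem_image hr, finsum_mem_congr (t := {i | p i}) rfl hF, hcoe, finsum_mem_coe_finset,
    Finset.sum_const, nsmul_eq_mul]

/-- The double points of the closed curve `f` are all positive and are listed without repetition
by the chords `q i = (s, t)`, `s < t`, of their two parameters in `[0, 1)`. The last condition
says that no two chords share an endpoint, that is, there are no triple points. -/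
structure PositiveGaussDiagram {ι : Type*} (f : ℝ → ℂ) (q : ι → ℝ × ℝ) : Prop where
  injective : Function.Injective q
  crossingPairs_eq : crossingPairsF f = range q
  det2_pos : ∀ i, 0 < det2 (deriv f (q i).1) (deriv f (q i).2)
  snd_ne_fst : ∀ i j, (q i).2 ≠ (q j).1

/-- The pair `(a(v), b(v))` of the double point `v` with chord `q i`, in a curve whose chords `q j`
are all positive. A chord crossing `q i` contributes nothing, since only one of its endpoints lies
on each arc; the second arc, which passes through the base point `0`, meets the chords enclosing
`q i` in the order opposite to that of `[0, 1)`, whence their sign. -/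
def chordIndices {ι : Type*} [Fintype ι] (q : ι → ℝ × ℝ) (i : ι) : ℤ × ℤ :=
  (#{j | (q i).1 < (q j).1 ∧ (q j).2 < (q i).2},
    #{j | (q i).2 < (q j).1} + #{j | (q j).2 < (q i).1} -
      #{j | (q j).1 < (q i).1 ∧ (q i).2 < (q j).2})

namespace PositiveGaussDiagram

variable {ι : Type*} {f : ℝ → ℂ} {q : ι → ℝ × ℝ}

lemma mem_crossingPairs (hq : PositiveGaussDiagram f q) (i : ι) : q i ∈ crossingPairsF f :=
  hq.crossingPairs_eq ▸ mem_range_self i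

lemma fst_nonneg (hq : PositiveGaussDiagram f q) (i : ι) : 0 ≤ (q i).1 :=
  (hq.mem_crossingPairs i).1.1

lemma fst_lt_snd (hq : PositiveGaussDiagram f q) (i : ι) : (q i).1 < (q i).2 :=
  (hq.mem_crossingPairs i).2.2.1

lemma snd_lt_one (hq : PositiveGaussDiagram f q) (i : ι) : (q i).2 < 1 :=
  (hq.mem_crossingPairs i).2.1.2

lemma map_fst_eq_map_snd (hq : PositiveGaussDiagram f q) (i : ι) : f (q i).1 = f (q i).2 :=
  (hq.mem_crossingPairs i).2.2.2

lemma exists_chord (hq : PositiveGaussDiagram f q) {s t : ℝ} (hs : 0 ≤ s) (hst : s < t)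
    (ht : t < 1) (hf : f s = f t) : ∃ i, q i = (s, t) := by
  have hmem : (s, t) ∈ crossingPairsF f := ⟨⟨hs, hst.trans ht⟩, ⟨hs.trans hst.le, ht⟩, hst, hf⟩
  rwa [hq.crossingPairs_eq] at hmem

lemma no_triple_point (hq : PositiveGaussDiagram f q) {a b c : ℝ} (ha : 0 ≤ a) (hab : a < b)
    (hbc : b < c) (hc : c < 1) (hfab : f a = f b) (hfbc : f b = f c) : False := by
  obtain ⟨i, hi⟩ := hq.exists_chord ha hab (hbc.trans hc) hfab
  obtain ⟨j, hj⟩ := hq.exists_chord (ha.trans hab.le) hbc hc hfbc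
  exact hq.snd_ne_fst i j (by rw [hi, hj])

lemma fiber_eq_pair (hq : PositiveGaussDiagram f q) (i : ι) :
    {t ∈ Ico (0 : ℝ) 1 | f t = f (q i).1} = {(q i).1, (q i).2} := by
  have h0 := hq.fst_nonneg i
  have hlt := hq.fst_lt_snd i
  have h1 := hq.snd_lt_one i
  have hf := hq.map_fst_eq_map_snd i
  refine Subset.antisymm ?_ ?_
  · rintro t ⟨ht, hft⟩
    by_contra hne
    simp only [mem_insert_iff, mem_singleton_iff, not_or] at hne
    rcases lt_or_gt_of_ne hne.1 with hbefore | hafter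
    · exact hq.no_triple_point ht.1 hbefore hlt h1 hft hf
    · rcases lt_or_gt_of_ne hne.2 with hbetween | hafter'
      · exact hq.no_triple_point h0 hafter hbetween h1 hft.symm (hft.trans hf)
      · exact hq.no_triple_point h0 hlt hafter' ht.2 hf (hf.symm.trans hft.symm)
  · rintro t (rfl | rfl)
    · exact ⟨⟨h0, hlt.trans h1⟩, rfl⟩
    · exact ⟨⟨h0.trans hlt.le, h1⟩, hf.symm⟩

lemma multF_fst (hq : PositiveGaussDiagram f q) (i : ι) : multF f (f (q i).1) = 2 := by
  rw [multF, hq.fiber_eq_pair, ncard_pair (hq.fst_lt_snd i).ne]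

lemma multF_le_one (hq : PositiveGaussDiagram f q) {p : ℂ} (hp : p ∉ range fun i => f (q i).1) :
    multF f p ≤ 1 := by
  have hno : ∀ s t : ℝ, 0 ≤ s → s < t → t < 1 → f s = p → f t ≠ p := by
    intro s t hs hst ht hfs hft
    obtain ⟨i, hi⟩ := hq.exists_chord hs hst ht (hfs.trans hft.symm)
    exact hp ⟨i, by simp only [hi, hfs]⟩
  have hsub : {t ∈ Ico (0 : ℝ) 1 | f t = p}.Subsingleton := by
    rintro s ⟨hs, hfs⟩ t ⟨ht, hft⟩
    by_contra hne
    rcases lt_or_gt_of_ne hne with h | h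
    · exact hno s t hs.1 h ht.2 hfs hft
    · exact hno t s ht.1 h hs.2 hft hfs
  exact (ncard_le_one hsub.finite).2 fun a ha b hb => hsub ha hb

lemma crossingSet_eq (hq : PositiveGaussDiagram f q) :
    crossingSetF f = range fun i => f (q i).1 := by
  ext p
  refine ⟨fun hp => ?_, ?_⟩
  · by_contra hnot
    exact absurd (hp.trans (hq.multF_le_one hnot)) (by norm_num)
  · rintro ⟨i, rfl⟩
    exact (hq.multF_fst i).ge

lemma injective_map_fst (hq : PositiveGaussDiagram f q) :
    Function.Injective fun i => f (q i).1 := by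
  intro i j hij
  have hpair : ({(q i).1, (q i).2} : Set ℝ) = {(q j).1, (q j).2} := by
    rw [← hq.fiber_eq_pair i, ← hq.fiber_eq_pair j, show f (q i).1 = f (q j).1 from hij]
  have hfst : (q i).1 ∈ ({(q j).1, (q j).2} : Set ℝ) := hpair ▸ mem_insert _ _
  have hsnd : (q i).2 ∈ ({(q j).1, (q j).2} : Set ℝ) := hpair ▸ mem_insert_of_mem _ rfl
  exact hq.injective (Prod.ext (hfst.resolve_right (hq.snd_ne_fst j i).symm)
    (hsnd.resolve_left (hq.snd_ne_fst i j)))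

lemma ncard_crossingSet [Fintype ι] (hq : PositiveGaussDiagram f q) :
    (crossingSetF f).ncard = Fintype.card ι := by
  rw [hq.crossingSet_eq, ← image_univ, ncard_image_of_injective _ hq.injective_map_fst,
    ncard_univ, Nat.card_eq_fintype_card]

lemma transverse (hq : PositiveGaussDiagram f q) (p : ℂ) : TransverseF f p := by
  intro s hs t ht hst hfs hft
  rcases lt_or_gt_of_ne hst with h | h
  · obtain ⟨i, hi⟩ := hq.exists_chord hs.1 h ht.2 (hfs.trans hft.symm)
    simpa only [hi] using (hq.det2_pos i).ne'
  · obtain ⟨i, hi⟩ := hq.exists_chord ht.1 h hs.2 (hft.trans hfs.symm)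
    rw [det2_swap]
    simpa only [hi] using (neg_neg_of_pos (hq.det2_pos i)).ne

lemma stable [Finite ι] (hq : PositiveGaussDiagram f q) : StableF f := by
  refine ⟨hq.crossingSet_eq ▸ finite_range _, fun p => ⟨?_, fun _ => hq.transverse p⟩⟩
  by_cases hp : p ∈ range fun i => f (q i).1
  · obtain ⟨i, rfl⟩ := hp
    exact (hq.multF_fst i).le
  · exact (hq.multF_le_one hp).trans one_le_two

lemma arcIndex_eq_card [Fintype ι] (hq : PositiveGaussDiagram f q) {α β : ℝ} (hα : 0 ≤ α)
    (hβ : β ≤ 1) : arcIndex f α β = #{i | α < (q i).1 ∧ (q i).2 < β} := by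
  have himage : {p : ℝ × ℝ | p.1 ∈ Ioo α β ∧ p.2 ∈ Ioo α β ∧ p.1 < p.2 ∧ f p.1 = f p.2} =
      q '' {i | α < (q i).1 ∧ (q i).2 < β} := by
    refine Subset.antisymm ?_ ?_
    · rintro ⟨s, t⟩ ⟨hs, ht, hst, hf⟩
      obtain ⟨i, hi⟩ := hq.exists_chord (hα.trans hs.1.le) hst (ht.2.trans_le hβ) hf
      exact ⟨i, by simpa only [mem_ofPred_eq, hi] using ⟨hs.1, ht.2⟩, hi⟩
    · rintro _ ⟨i, ⟨hleft, hright⟩, rfl⟩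
      have hlt := hq.fst_lt_snd i
      exact ⟨⟨hleft, hlt.trans hright⟩, ⟨hleft.trans hlt, hright⟩, hlt, hq.map_fst_eq_map_snd i⟩
  rw [arcIndex, himage, finsum_mem_image_eq_card_mul hq.injective.injOn
    (fun i _ => crossSign_eq_one (hq.det2_pos i)), mul_one]

section Wrap

variable {α β : ℝ}

/-- The double points seen from a chord around `[α, β]` are visited in the opposite order on the
arc that runs from `β` past the end of the period to `α + 1`; this makes them negative. -/
lemma setOf_crossings_wrap_eq (hq : PositiveGaussDiagram f q) (hper : Function.Periodic f 1)
    (hα : 0 ≤ α) (hαβ : α < β) (hβ : β < 1) :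
    {p : ℝ × ℝ | p.1 ∈ Ioo β (α + 1) ∧ p.2 ∈ Ioo β (α + 1) ∧ p.1 < p.2 ∧ f p.1 = f p.2} =
      q '' {i | β < (q i).1} ∪
        ((fun i => ((q i).1 + 1, (q i).2 + 1)) '' {i | (q i).2 < α} ∪
          (fun i => ((q i).2, (q i).1 + 1)) '' {i | (q i).1 < α ∧ β < (q i).2}) := by
  refine Subset.antisymm ?_ (union_subset ?_ (union_subset ?_ ?_))
  · rintro ⟨s, t⟩ ⟨⟨hs, -⟩, ⟨-, ht⟩, hst, hf⟩
    dsimp only at *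
    rcases lt_or_ge t 1 with ht1 | ht1
    · obtain ⟨i, hi⟩ := hq.exists_chord (by linarith) hst ht1 hf
      exact Or.inl ⟨i, by simpa only [mem_ofPred_eq, hi], hi⟩
    · rcases lt_or_ge s 1 with hs1 | hs1
      · obtain ⟨i, hi⟩ := hq.exists_chord (s := t - 1) (t := s) (by linarith) (by linarith) hs1
          (by rw [hper.sub_eq, hf])
        refine Or.inr (Or.inr ⟨i, ?_, by simp only [hi, sub_add_cancel]⟩)
        simp only [mem_ofPred_eq, hi]
        constructor <;> linarith
      · obtain ⟨i, hi⟩ := hq.exists_chord (s := s - 1) (t := t - 1) (by linarith) (by linarith)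
          (by linarith) (by rw [hper.sub_eq, hper.sub_eq, hf])
        refine Or.inr (Or.inl ⟨i, ?_, by simp only [hi, sub_add_cancel]⟩)
        simp only [mem_ofPred_eq, hi]
        linarith
  all_goals
    rintro _ ⟨i, hi, rfl⟩
    have h0 := hq.fst_nonneg i
    have hlt := hq.fst_lt_snd i
    have h1 := hq.snd_lt_one i
    have hf := hq.map_fst_eq_map_snd i
    simp only [mem_ofPred_eq, mem_Ioo, hper _] at hi ⊢
    refine ⟨⟨?_, ?_⟩, ⟨?_, ?_⟩, ?_, by rw [hf]⟩ <;> linarith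

lemma arcIndex_wrap_eq_card [Fintype ι] (hq : PositiveGaussDiagram f q)
    (hper : Function.Periodic f 1) (hα : 0 ≤ α) (hαβ : α < β) (hβ : β < 1) :
    arcIndex f β (α + 1) =
      #{i | β < (q i).1} + #{i | (q i).2 < α} - #{i | (q i).1 < α ∧ β < (q i).2} := by
  have hinj_shift : Function.Injective fun i => ((q i).1 + 1, (q i).2 + 1) := fun i j hij => by
    rw [Prod.mk.injEq, add_left_inj, add_left_inj] at hij
    exact hq.injective (Prod.ext hij.1 hij.2)
  have hinj_swap : Function.Injective fun i => ((q i).2, (q i).1 + 1) := fun i j hij => by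
    rw [Prod.mk.injEq, add_left_inj] at hij
    exact hq.injective (Prod.ext hij.2 hij.1)
  have hdisj_shift_swap : Disjoint ((fun i => ((q i).1 + 1, (q i).2 + 1)) '' {i | (q i).2 < α})
      ((fun i => ((q i).2, (q i).1 + 1)) '' {i | (q i).1 < α ∧ β < (q i).2}) := by
    rw [Set.disjoint_left]
    rintro _ ⟨i, -, rfl⟩ ⟨j, -, hij⟩
    linarith [(Prod.mk.inj hij).1, hq.snd_lt_one j, hq.fst_nonneg i]
  have hdisj : Disjoint (q '' {i | β < (q i).1})
      ((fun i => ((q i).1 + 1, (q i).2 + 1)) '' {i | (q i).2 < α} ∪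
        (fun i => ((q i).2, (q i).1 + 1)) '' {i | (q i).1 < α ∧ β < (q i).2}) := by
    rw [Set.disjoint_left]
    rintro _ ⟨i, -, rfl⟩ (⟨j, -, hij⟩ | ⟨j, -, hij⟩)
    all_goals
      linarith [congrArg Prod.snd hij, hq.snd_lt_one i, hq.fst_nonneg j, hq.fst_lt_snd j]
  have hder := periodic_deriv hper
  rw [arcIndex, hq.setOf_crossings_wrap_eq hper hα hαβ hβ,
    finsum_mem_union hdisj ((toFinite _).image _) (((toFinite _).image _).union
      ((toFinite _).image _)),
    finsum_mem_union hdisj_shift_swap ((toFinite _).image _) ((toFinite _).image _),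
    finsum_mem_image_eq_card_mul (c := 1) hq.injective.injOn
      fun i _ => crossSign_eq_one (hq.det2_pos i),
    finsum_mem_image_eq_card_mul (c := 1) hinj_shift.injOn
      fun i _ => crossSign_eq_one (by rw [hder, hder]; exact hq.det2_pos i),
    finsum_mem_image_eq_card_mul (c := -1) hinj_swap.injOn
      fun i _ => crossSign_swap_eq_neg_one (by rw [hder]; exact hq.det2_pos i)]
  ring

end Wrap

lemma fX_eq_sum [Fintype ι] {c : PlanarCurve} (hq : PositiveGaussDiagram c.toFun q) :
    fX c = ∑ i, FreeAbelianGroup.of (chordIndices q i) := by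
  rw [fX, hq.crossingPairs_eq, finsum_mem_range hq.injective, finsum_eq_sum_of_fintype]
  refine Finset.sum_congr rfl fun i _ => ?_
  rw [if_pos (hq.det2_pos i), hq.arcIndex_eq_card (hq.fst_nonneg i) (hq.snd_lt_one i).le,
    hq.arcIndex_wrap_eq_card c.periodic (hq.fst_nonneg i) (hq.fst_lt_snd i) (hq.snd_lt_one i),
    chordIndices]

end PositiveGaussDiagram

end GaussDiagram

/-! ### Periodic bumps and kinks -/

section Bump

open Real

lemma deriv_expNegInvGlue_pos {y : ℝ} (hy : 0 < y) : 0 < deriv expNegInvGlue y := by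
  have hexp : HasDerivAt (fun x : ℝ => exp (-x⁻¹)) (exp (-y⁻¹) * (-(-(y ^ 2)⁻¹))) y :=
    (hasDerivAt_inv hy.ne').neg.exp
  have hglue : expNegInvGlue =ᶠ[nhds y] fun x : ℝ => exp (-x⁻¹) := by
    filter_upwards [lt_mem_nhds hy] with x hx
    simp [expNegInvGlue, not_le.2 hx]
  rw [(hexp.congr_of_eventuallyEq hglue).deriv, neg_neg]
  positivity

lemma strictMonoOn_expNegInvGlue : StrictMonoOn expNegInvGlue (Ici 0) := by
  refine strictMonoOn_of_deriv_pos (convex_Ici 0)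
    (expNegInvGlue.contDiff (n := 0)).continuous.continuousOn fun x hx => ?_
  rw [interior_Ici] at hx
  exact deriv_expNegInvGlue_pos hx

lemma strictAntiOn_cos_two_pi_mul : StrictAntiOn (fun x => cos (2 * π * x)) (Icc 0 (1 / 2)) := by
  intro x hx y hy hxy
  have := pi_pos
  exact cos_lt_cos_of_nonneg_of_le_pi (by nlinarith [hx.1]) (by nlinarith [hy.2]) (by nlinarith)

lemma sin_two_pi_mul_pos {x : ℝ} (hx : 0 < x) (hx' : x < 1 / 2) : 0 < sin (2 * π * x) := by
  have := pi_pos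
  exact sin_pos_of_pos_of_lt_pi (by positivity) (by nlinarith)

lemma mul_sin_lt_mul_sin {x y : ℝ} (hx : 0 < x) (hxy : x < y) (hy : y ≤ π) :
    x * sin y < y * sin x := by
  have hy0 : 0 < y := hx.trans hxy
  have h := strictConcaveOn_sin_Icc.secant_strict_mono ⟨le_rfl, pi_pos.le⟩
    ⟨hx.le, hxy.le.trans hy⟩ ⟨hy0.le, hy⟩ hx.ne' hy0.ne' hxy
  rw [sin_zero, sub_zero, sub_zero, sub_zero, sub_zero, div_lt_div_iff₀ hy0 hx] at h
  linarith

/-- A smooth `1`-periodic even bump which, for `0 ≤ w ≤ 1 / 2`, is positive exactly at distance less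
than `w` from `ℤ`. -/
def bump (w x : ℝ) : ℝ := expNegInvGlue (cos (2 * π * x) - cos (2 * π * w))

variable {w x y : ℝ}

lemma bump_nonneg (w x : ℝ) : 0 ≤ bump w x := expNegInvGlue.nonneg _

lemma bump_neg (w x : ℝ) : bump w (-x) = bump w x := by
  rw [bump, mul_neg, cos_neg, bump]

lemma bump_abs (w x : ℝ) : bump w |x| = bump w x := by
  rcases abs_choice x with h | h <;> simp only [h, bump_neg]

lemma periodic_bump (w : ℝ) : Function.Periodic (bump w) 1 := fun x => by
  rw [bump, mul_add, mul_one, cos_add_two_pi, bump]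

lemma contDiff_bump (w : ℝ) : ContDiff ℝ (⊤ : ℕ∞) (bump w) :=
  (expNegInvGlue.contDiff (n := ⊤)).comp (by fun_prop)

lemma hasDerivAt_bump (w x : ℝ) : HasDerivAt (bump w) (deriv (bump w) x) x :=
  ((contDiff_bump w).differentiable (by simp) x).hasDerivAt

lemma deriv_bump_neg (w x : ℝ) : deriv (bump w) (-x) = -deriv (bump w) x := by
  have h := deriv_comp_neg (bump w) x
  rw [funext (bump_neg w)] at h
  rw [h, neg_neg]

lemma deriv_bump_eq_zero (h : bump w x = 0) : deriv (bump w) x = 0 :=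
  IsLocalMin.deriv_eq_zero (.of_forall fun y => h ▸ bump_nonneg w y)

lemma bump_pos (hw : w ≤ 1 / 2) (hx : |x| < w) : 0 < bump w x := by
  rw [← bump_abs]
  exact expNegInvGlue.pos_of_pos (sub_pos.2 (strictAntiOn_cos_two_pi_mul
    ⟨abs_nonneg x, hx.le.trans hw⟩ ⟨(abs_nonneg x).trans hx.le, hw⟩ hx))

lemma bump_eq_zero (hw : 0 ≤ w) (hx : w ≤ |x|) (hx' : |x| ≤ 1 - w) : bump w x = 0 := by
  refine expNegInvGlue.zero_of_nonpos (sub_nonpos.2 ?_)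
  rw [← cos_abs, abs_mul, abs_of_pos two_pi_pos]
  have hanti := strictAntiOn_cos_two_pi_mul.antitoneOn
  rcases le_total |x| (1 / 2) with h | h
  · exact hanti ⟨hw, hx.trans h⟩ ⟨abs_nonneg x, h⟩ hx
  · have := hanti (a := w) (b := 1 - |x|) ⟨hw, by linarith⟩ ⟨by linarith, by linarith⟩
      (by linarith)
    simpa only [mul_sub, mul_one, cos_two_pi_sub] using this

lemma antitoneOn_bump (w : ℝ) : AntitoneOn (bump w) (Icc 0 (1 / 2)) := fun _ hx _ hy hxy =>
  expNegInvGlue.monotone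
    (sub_le_sub_right (strictAntiOn_cos_two_pi_mul.antitoneOn hx hy hxy) _)

lemma exists_int_of_bump_eq (h : bump w x = bump w y) (hpos : 0 < bump w x) :
    ∃ n : ℤ, y = n + x ∨ y = n - x := by
  have harg : ∀ z, 0 < bump w z → cos (2 * π * z) - cos (2 * π * w) ∈ Ici 0 := fun z hz =>
    (not_le.1 fun hle => hz.ne' (expNegInvGlue.zero_of_nonpos hle)).le
  have hcos := strictMonoOn_expNegInvGlue.injOn (harg x hpos) (harg y (h ▸ hpos)) h
  obtain ⟨n, hn⟩ := cos_eq_cos_iff.1 (sub_left_inj.1 hcos)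
  refine ⟨n, hn.imp (fun h => ?_) fun h => ?_⟩ <;>
  exact mul_left_cancel₀ two_pi_pos.ne' (h.trans (by ring))

lemma deriv_bump_lt_zero (hw : w ≤ 1 / 2) (hx : 0 < x) (hxw : x < w) : deriv (bump w) x < 0 := by
  have hcos : HasDerivAt (fun x : ℝ => cos (2 * π * x) - cos (2 * π * w))
      (-sin (2 * π * x) * (2 * π)) x :=
    (((hasDerivAt_id' x).const_mul (2 * π)).congr_deriv (mul_one _)).cos.sub_const _
  have hglue := ((expNegInvGlue.contDiff (n := 1)).differentiable (by norm_num)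
    (cos (2 * π * x) - cos (2 * π * w))).hasDerivAt
  have hderiv : deriv (bump w) x = _ := (hglue.comp x hcos).deriv
  have hinner := deriv_expNegInvGlue_pos (sub_pos.2 (strictAntiOn_cos_two_pi_mul
    ⟨hx.le, hxw.le.trans hw⟩ ⟨hx.le.trans hxw.le, hw⟩ hxw))
  rw [hderiv]
  refine mul_neg_of_pos_of_neg hinner (mul_neg_of_neg_of_pos ?_ two_pi_pos)
  exact neg_neg_of_pos (sin_two_pi_mul_pos hx (hxw.trans_le hw))

lemma deriv_bump_nonpos (hw : w ≤ 1 / 2) (hx : 0 ≤ x) (hxw : x < w) : deriv (bump w) x ≤ 0 := by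
  rcases hx.eq_or_lt with rfl | hx
  · have h := deriv_bump_neg w 0
    rw [neg_zero] at h
    linarith
  · exact (deriv_bump_lt_zero hw hx hxw).le

lemma deriv_bump_ne_zero (hw : w ≤ 1 / 2) (hx : x ≠ 0) (hxw : |x| < w) :
    deriv (bump w) x ≠ 0 := by
  have h := deriv_bump_lt_zero hw (abs_pos.2 hx) hxw
  rcases abs_choice x with habs | habs <;> rw [habs] at h
  · exact h.ne
  · rw [deriv_bump_neg] at h
    exact fun h0 => h.ne (by rw [h0, neg_zero])

end Bump

section Kink

open Real

variable {ε u v : ℝ}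

/-- The amount by which the phase of a kink of half-width `ε` lags behind the uniform phase; the
normalization makes it equal to `ε` when the bump is replaced by its maximum and `u` by `ε`. -/
def backtrack (ε u : ℝ) : ℝ :=
  ε / (bump ε 0 * sin (2 * π * ε)) * (bump ε u * sin (2 * π * u))

/-- The phase along a kink of half-width `ε`, relative to its centre `u = 0`. It runs from `-ε` to
`ε`, but backwards near `u = 0`; together with the radial bump `bump ε u` this makes a loop. -/
def kinkPhase (ε u : ℝ) : ℝ := u - backtrack ε u

lemma contDiff_backtrack (ε : ℝ) : ContDiff ℝ (⊤ : ℕ∞) (backtrack ε) :=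
  contDiff_const.mul ((contDiff_bump ε).mul (by fun_prop))

lemma periodic_backtrack (ε : ℝ) : Function.Periodic (backtrack ε) 1 := fun u => by
  rw [backtrack, periodic_bump, mul_add, mul_one, sin_add_two_pi, backtrack]

lemma backtrack_neg (ε u : ℝ) : backtrack ε (-u) = -backtrack ε u := by
  rw [backtrack, bump_neg, mul_neg, sin_neg, mul_neg, mul_neg, backtrack]

lemma kinkPhase_neg (ε u : ℝ) : kinkPhase ε (-u) = -kinkPhase ε u := by
  rw [kinkPhase, backtrack_neg, kinkPhase]; ring

lemma backtrack_eq_zero (h : bump ε u = 0) : backtrack ε u = 0 := by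
  rw [backtrack, h, zero_mul, mul_zero]

lemma hasDerivAt_backtrack (ε u : ℝ) : HasDerivAt (backtrack ε)
    (ε / (bump ε 0 * sin (2 * π * ε)) *
      (deriv (bump ε) u * sin (2 * π * u) + bump ε u * (cos (2 * π * u) * (2 * π)))) u := by
  have hsin : HasDerivAt (fun u : ℝ => sin (2 * π * u)) (cos (2 * π * u) * (2 * π)) u :=
    (((hasDerivAt_id' u).const_mul (2 * π)).congr_deriv (mul_one _)).sin
  exact ((hasDerivAt_bump ε u).mul hsin).const_mul _

lemma deriv_backtrack_eq_zero (h : bump ε u = 0) : deriv (backtrack ε) u = 0 := by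
  rw [(hasDerivAt_backtrack ε u).deriv, deriv_bump_eq_zero h, h]
  ring

lemma hasDerivAt_kinkPhase (ε u : ℝ) :
    HasDerivAt (kinkPhase ε) (1 - deriv (backtrack ε) u) u :=
  (hasDerivAt_id u).sub (hasDerivAt_backtrack ε u).differentiableAt.hasDerivAt

lemma deriv_kinkPhase (ε u : ℝ) : deriv (kinkPhase ε) u = 1 - deriv (backtrack ε) u :=
  (hasDerivAt_kinkPhase ε u).deriv

lemma deriv_kinkPhase_neg (ε u : ℝ) : deriv (kinkPhase ε) (-u) = deriv (kinkPhase ε) u := by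
  have h := deriv_comp_neg (kinkPhase ε) u
  rw [funext (kinkPhase_neg ε), deriv.fun_neg] at h
  exact (neg_injective h).symm

lemma kinkPhase_zero (ε : ℝ) : kinkPhase ε 0 = 0 := by
  simp [kinkPhase, backtrack]

lemma bump_zero_mul_sin_pos (hε : 0 < ε) (hε' : ε ≤ 1 / 4) :
    0 < bump ε 0 * sin (2 * π * ε) :=
  mul_pos (bump_pos (by linarith) (by simpa using hε)) (sin_two_pi_mul_pos hε (by linarith))

lemma backtrack_pos (hε' : ε ≤ 1 / 4) (hu : 0 < u) (huε : u < ε) : 0 < backtrack ε u := by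
  have hε : 0 < ε := hu.trans huε
  have hden := bump_zero_mul_sin_pos hε hε'
  have hbump : 0 < bump ε u := bump_pos (by linarith) (by rwa [abs_of_pos hu])
  have hsin : 0 < sin (2 * π * u) := sin_two_pi_mul_pos hu (by linarith)
  unfold backtrack
  positivity

lemma backtrack_lt (hε' : ε ≤ 1 / 4) (hu : 0 < u) (huε : u < ε) : backtrack ε u < ε := by
  have hε : 0 < ε := hu.trans huε
  have hden := bump_zero_mul_sin_pos hε hε'
  have hbump : bump ε u ≤ bump ε 0 :=
    antitoneOn_bump ε ⟨le_rfl, by norm_num⟩ ⟨hu.le, by linarith⟩ hu.le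
  have hsin : sin (2 * π * u) < sin (2 * π * ε) := by
    have := pi_pos
    exact sin_lt_sin_of_lt_of_le_pi_div_two (by nlinarith) (by nlinarith) (by nlinarith)
  rw [backtrack, div_mul_eq_mul_div, div_lt_iff₀ hden]
  refine mul_lt_mul_of_pos_left ?_ hε
  exact mul_lt_mul' hbump hsin (sin_two_pi_mul_pos hu (by linarith)).le
    (bump_pos (by linarith) (by simpa using hε))

lemma abs_kinkPhase_lt (hε' : ε ≤ 1 / 4) (hu : |u| < ε) : |kinkPhase ε u| < ε := by
  have hpos : ∀ v, 0 < v → v < ε → |kinkPhase ε v| < ε := fun v hv hvε => by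
    have h1 := backtrack_pos hε' hv hvε
    have h2 := backtrack_lt hε' hv hvε
    rw [kinkPhase, abs_lt]
    constructor <;> linarith
  rcases lt_trichotomy u 0 with h | rfl | h
  · rw [← abs_neg, ← kinkPhase_neg]
    exact hpos (-u) (neg_pos.2 h) (by rwa [abs_of_neg h] at hu)
  · rwa [kinkPhase_zero]
  · exact hpos u h (by rwa [abs_of_pos h] at hu)

lemma mul_backtrack_lt_mul_backtrack (hε' : ε ≤ 1 / 4) (hu : 0 < u) (huv : u < v) (hv : v < ε) :
    u * backtrack ε v < v * backtrack ε u := by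
  have hden := bump_zero_mul_sin_pos (hu.trans (huv.trans hv)) hε'
  have hbump : bump ε v ≤ bump ε u :=
    antitoneOn_bump ε ⟨hu.le, by linarith⟩ ⟨by linarith, by linarith⟩ huv.le
  have hbump_pos : 0 < bump ε u := bump_pos (by linarith) (by rw [abs_of_pos hu]; linarith)
  have hsin_pos : 0 < sin (2 * π * v) := sin_two_pi_mul_pos (by linarith) (by linarith)
  have hsin : u * sin (2 * π * v) < v * sin (2 * π * u) := by
    have := pi_pos
    have h := mul_sin_lt_mul_sin (x := 2 * π * u) (y := 2 * π * v) (by positivity)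
      (by nlinarith) (by nlinarith)
    exact lt_of_mul_lt_mul_left (by linarith) two_pi_pos.le
  calc u * backtrack ε v
      = ε / (bump ε 0 * sin (2 * π * ε)) * (bump ε v * (u * sin (2 * π * v))) := by
        rw [backtrack]; ring
    _ < ε / (bump ε 0 * sin (2 * π * ε)) * (bump ε u * (v * sin (2 * π * u))) :=
        mul_lt_mul_of_pos_left (mul_lt_mul' hbump hsin (by positivity) hbump_pos)
          (div_pos (hu.trans (huv.trans hv)) hden)
    _ = v * backtrack ε u := by rw [backtrack]; ring

lemma eq_of_kinkPhase_eq_zero (hε' : ε ≤ 1 / 4) (hu : u ∈ Ioo 0 ε) (hv : v ∈ Ioo 0 ε)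
    (hu0 : kinkPhase ε u = 0) (hv0 : kinkPhase ε v = 0) : u = v := by
  rw [kinkPhase, sub_eq_zero] at hu0 hv0
  rcases lt_trichotomy u v with h | h | h
  · have := mul_backtrack_lt_mul_backtrack hε' hu.1 h hv.2
    rw [← hu0, ← hv0, mul_comm] at this
    exact absurd this (lt_irrefl _)
  · exact h
  · have := mul_backtrack_lt_mul_backtrack hε' hv.1 h hu.2
    rw [← hu0, ← hv0, mul_comm] at this
    exact absurd this (lt_irrefl _)

lemma deriv_kinkPhase_zero_neg (hε : 0 < ε) (hε' : ε ≤ 1 / 4) : deriv (kinkPhase ε) 0 < 0 := by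
  have hbump : 0 < bump ε 0 := bump_pos (by linarith) (by simpa using hε)
  have hsin_pos : 0 < sin (2 * π * ε) := sin_two_pi_mul_pos hε (by linarith)
  have hsin : sin (2 * π * ε) < 2 * π * ε := sin_lt (by positivity)
  have hderiv : deriv (kinkPhase ε) 0 = 1 - 2 * π * ε / sin (2 * π * ε) := by
    rw [deriv_kinkPhase, (hasDerivAt_backtrack ε 0).deriv]
    simp only [mul_zero, sin_zero, cos_zero, zero_add, one_mul]
    field_simp
  rw [hderiv, sub_neg, one_lt_div hsin_pos]
  exact hsin

lemma exists_kinkPhase_eq_zero (hε : 0 < ε) (hε' : ε ≤ 1 / 4) :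
    ∃ v ∈ Ioo 0 ε, kinkPhase ε v = 0 := by
  obtain ⟨u, hu_neg, hu⟩ : ∃ u, kinkPhase ε u < 0 ∧ u ∈ Ioo 0 ε := by
    have hsign := eventually_nhdsWithin_sign_eq_of_deriv_neg
      (deriv_kinkPhase_zero_neg hε hε') (kinkPhase_zero ε)
    have hright := hsign.filter_mono (nhdsWithin_le_nhds (s := Ioi 0))
    obtain ⟨u, hu, huε⟩ := (hright.and (Ioo_mem_nhdsGT hε)).exists
    rw [zero_sub, sign_neg (neg_neg_of_pos huε.1), sign_eq_neg_one_iff] at hu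
    exact ⟨u, hu, huε⟩
  have hend : kinkPhase ε ε = ε := by
    have : bump ε ε = 0 := bump_eq_zero hε.le (le_abs_self ε) (by rw [abs_of_pos hε]; linarith)
    rw [kinkPhase, backtrack_eq_zero this, sub_zero]
  have hcont : Continuous (kinkPhase ε) := continuous_id.sub (contDiff_backtrack ε).continuous
  obtain ⟨v, hv, hv0⟩ := intermediate_value_Ioo hu.2.le hcont.continuousOn
    ⟨hu_neg, hend.symm ▸ hε⟩
  exact ⟨v, ⟨hu.1.trans hv.1, hv.2⟩, hv0⟩

lemma deriv_kinkPhase_pos (hε' : ε ≤ 1 / 4) (hv : v ∈ Ioo 0 ε) (hv0 : kinkPhase ε v = 0) :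
    0 < deriv (kinkPhase ε) v := by
  obtain ⟨hvpos, hvε⟩ := hv
  have hscale : 0 < ε / (bump ε 0 * sin (2 * π * ε)) :=
    div_pos (hvpos.trans hvε) (bump_zero_mul_sin_pos (hvpos.trans hvε) hε')
  have hbump : 0 < bump ε v := bump_pos (by linarith) (by rwa [abs_of_pos hvpos])
  have hbump' : deriv (bump ε) v < 0 := deriv_bump_lt_zero (by linarith) hvpos hvε
  have hsin : 0 < sin (2 * π * v) := sin_two_pi_mul_pos hvpos (by linarith)
  have hcos : 2 * π * v * cos (2 * π * v) < sin (2 * π * v) := by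
    have := pi_pos
    have hlt : 2 * π * v < π / 2 := by nlinarith
    have hcos_pos : 0 < cos (2 * π * v) := cos_pos_of_mem_Ioo ⟨by nlinarith, hlt⟩
    have := lt_tan (by positivity) hlt
    rwa [tan_eq_sin_div_cos, lt_div_iff₀ hcos_pos] at this
  have hlt : v * deriv (backtrack ε) v < v := by
    calc v * deriv (backtrack ε) v
        = ε / (bump ε 0 * sin (2 * π * ε)) * (bump ε v * (2 * π * v * cos (2 * π * v)) +
            v * (deriv (bump ε) v * sin (2 * π * v))) := by
          rw [(hasDerivAt_backtrack ε v).deriv]; ring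
      _ < ε / (bump ε 0 * sin (2 * π * ε)) * (bump ε v * sin (2 * π * v) + 0) := by
          refine mul_lt_mul_of_pos_left (add_lt_add (mul_lt_mul_of_pos_left hcos hbump) ?_) hscale
          exact mul_neg_of_pos_of_neg hvpos (mul_neg_of_neg_of_pos hbump' hsin)
      _ = backtrack ε v := by rw [add_zero, backtrack]
      _ = v := (sub_eq_zero.1 hv0).symm
  rw [deriv_kinkPhase, sub_pos]
  exact lt_of_mul_lt_mul_left (by linarith) hvpos.le

end Kink

/-! ### Curves in logarithmic polar coordinates -/

section Polar

open Real

/-- The plane curve with logarithmic polar coordinates `(ρ, θ)`. -/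
def polarCurve (ρ θ : ℝ → ℝ) (t : ℝ) : ℂ := Complex.exp (ρ t + θ t * Complex.I)

/-- The velocity of `polarCurve ρ θ`, divided by its position and by `I`; its argument is the
angle from the counterclockwise circle through the point to the curve. -/
def polarVelocity (ρ θ : ℝ → ℝ) (t : ℝ) : ℂ := deriv θ t - deriv ρ t * Complex.I

variable {ρ θ : ℝ → ℝ} {s t : ℝ}

@[simp] lemma polarVelocity_re (ρ θ : ℝ → ℝ) (t : ℝ) : (polarVelocity ρ θ t).re = deriv θ t := by
  simp [polarVelocity]

@[simp] lemma polarVelocity_im (ρ θ : ℝ → ℝ) (t : ℝ) : (polarVelocity ρ θ t).im = -deriv ρ t := by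
  simp [polarVelocity]

lemma polarCurve_eq_iff :
    polarCurve ρ θ s = polarCurve ρ θ t ↔ ρ s = ρ t ∧ ∃ n : ℤ, θ s = θ t + 2 * π * n := by
  rw [polarCurve, polarCurve, Complex.exp_eq_exp_iff_exists_int]
  constructor
  · rintro ⟨n, hn⟩
    refine ⟨by simpa using congrArg Complex.re hn, n, ?_⟩
    simpa [mul_comm (n : ℝ)] using congrArg Complex.im hn
  · rintro ⟨hρ, n, hn⟩
    refine ⟨n, ?_⟩
    rw [hρ, hn]
    push_cast
    ring

lemma periodic_polarCurve {c : ℝ} {n : ℤ} (hρ : Function.Periodic ρ c)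
    (hθ : ∀ t, θ (t + c) = θ t + 2 * π * n) : Function.Periodic (polarCurve ρ θ) c := fun t =>
  polarCurve_eq_iff.2 ⟨hρ t, n, hθ t⟩

lemma contDiff_polarCurve {n : ℕ∞} (hρ : ContDiff ℝ n ρ) (hθ : ContDiff ℝ n θ) :
    ContDiff ℝ n (polarCurve ρ θ) :=
  ((Complex.ofRealCLM.contDiff.comp hρ).add
    ((Complex.ofRealCLM.contDiff.comp hθ).mul contDiff_const)).cexp

lemma continuous_polarVelocity (hρ : ContDiff ℝ 1 ρ) (hθ : ContDiff ℝ 1 θ) :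
    Continuous (polarVelocity ρ θ) :=
  (Complex.continuous_ofReal.comp (hθ.continuous_deriv le_rfl)).sub
    ((Complex.continuous_ofReal.comp (hρ.continuous_deriv le_rfl)).mul continuous_const)

lemma deriv_polarCurve (hρ : DifferentiableAt ℝ ρ t) (hθ : DifferentiableAt ℝ θ t) :
    deriv (polarCurve ρ θ) t = polarCurve ρ θ t * (Complex.I * polarVelocity ρ θ t) := by
  have h : HasDerivAt (polarCurve ρ θ) _ t :=
    (hρ.hasDerivAt.ofReal_comp.add (hθ.hasDerivAt.ofReal_comp.mul_const Complex.I)).cexp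
  rw [h.deriv, polarCurve, polarVelocity]
  linear_combination Complex.exp (ρ t + θ t * Complex.I) * ((deriv ρ t : ℝ) : ℂ) * Complex.I_mul_I

lemma det2_deriv_polarCurve (hρ : Differentiable ℝ ρ) (hθ : Differentiable ℝ θ)
    (h : polarCurve ρ θ s = polarCurve ρ θ t) :
    det2 (deriv (polarCurve ρ θ) s) (deriv (polarCurve ρ θ) t) =
      Complex.normSq (polarCurve ρ θ t) *
        (deriv ρ s * deriv θ t - deriv θ s * deriv ρ t) := by
  rw [deriv_polarCurve (hρ s) (hθ s), deriv_polarCurve (hρ t) (hθ t), h]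
  simp [det2, Complex.normSq_apply]
  ring

lemma det2_deriv_polarCurve_pos (hρ : Differentiable ℝ ρ) (hθ : Differentiable ℝ θ)
    (h : polarCurve ρ θ s = polarCurve ρ θ t)
    (hdet : 0 < deriv ρ s * deriv θ t - deriv θ s * deriv ρ t) :
    0 < det2 (deriv (polarCurve ρ θ) s) (deriv (polarCurve ρ θ) t) := by
  rw [det2_deriv_polarCurve hρ hθ h]
  exact mul_pos (Complex.normSq_pos.2 (Complex.exp_ne_zero _)) hdet

lemma deriv_polarCurve_eq_norm_mul_exp (hρ : DifferentiableAt ℝ ρ t)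
    (hθ : DifferentiableAt ℝ θ t) (n : ℤ) :
    deriv (polarCurve ρ θ) t = (‖deriv (polarCurve ρ θ) t‖ : ℂ) * Complex.exp
      ((θ t + π / 2 + (Complex.arg (polarVelocity ρ θ t) - 2 * π * n) : ℝ) * Complex.I) := by
  have hnorm : ‖deriv (polarCurve ρ θ) t‖ = Real.exp (ρ t) * ‖polarVelocity ρ θ t‖ := by
    rw [deriv_polarCurve hρ hθ, norm_mul, norm_mul, Complex.norm_I, one_mul, polarCurve,
      Complex.norm_exp]
    simp
  have hexp : Complex.exp
      ((θ t + π / 2 + (Complex.arg (polarVelocity ρ θ t) - 2 * π * n) : ℝ) * Complex.I) =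
      Complex.exp (θ t * Complex.I) * Complex.I *
        Complex.exp (Complex.arg (polarVelocity ρ θ t) * Complex.I) := by
    have hsplit : ((θ t + π / 2 + (Complex.arg (polarVelocity ρ θ t) - 2 * π * n) : ℝ) : ℂ) *
        Complex.I = θ t * Complex.I + π / 2 * Complex.I +
          Complex.arg (polarVelocity ρ θ t) * Complex.I + (-n : ℤ) * (2 * π * Complex.I) := by
      push_cast
      ring
    rw [hsplit, Complex.exp_add, Complex.exp_int_mul_two_pi_mul_I, mul_one, Complex.exp_add,
      Complex.exp_add, Complex.exp_pi_div_two_mul_I]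
  rw [hnorm, hexp, deriv_polarCurve hρ hθ, polarCurve, Complex.exp_add]
  nth_rw 1 [← Complex.norm_mul_exp_arg_mul_I (polarVelocity ρ θ t)]
  push_cast
  ring

/-- `N` records the turns of the polar velocity that `Complex.arg` forgets. -/
lemma hasWhitney_of_polarCurve {c : PlanarCurve} (hc : c.toFun = polarCurve ρ θ)
    (hρ : Differentiable ℝ ρ) (hθ : Differentiable ℝ θ) {N : ℝ → ℤ} {m n : ℤ}
    (hcont : Continuous fun t => Complex.arg (polarVelocity ρ θ t) - 2 * π * N t)
    (hθm : θ 1 = θ 0 + 2 * π * m) (hNn : N 1 = N 0 + n)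
    (hvel : polarVelocity ρ θ 1 = polarVelocity ρ θ 0) : c.HasWhitney (m - n) := by
  refine ⟨fun t => θ t + π / 2 + (Complex.arg (polarVelocity ρ θ t) - 2 * π * N t),
    (hθ.continuous.add continuous_const).add hcont, fun t => ?_, ?_⟩
  · rw [hc]
    exact deriv_polarCurve_eq_norm_mul_exp (hρ t) (hθ t) (N t)
  · simp only [hθm, hNn, hvel]
    push_cast
    ring

end Polar

section ArgLift

open Real Filter Topology

/-- At time `t₀` the plane curve `G` crosses the negative real axis, which is the branch cut of
`Complex.arg`, from below to above. -/
structure CrossesBranchCutUpward (G : ℝ → ℂ) (t₀ : ℝ) : Prop where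
  re_neg : (G t₀).re < 0
  im_neg_left : ∀ᶠ t in 𝓝[<] t₀, (G t).im < 0
  im_nonneg_right : ∀ᶠ t in 𝓝[≥] t₀, 0 ≤ (G t).im

variable {G : ℝ → ℂ} {t₀ : ℝ}

/-- Near `t₀` the lifted argument is `arg (-G) + π`. -/
lemma CrossesBranchCutUpward.continuousAt_arg_sub_floor (h : CrossesBranchCutUpward G t₀)
    (hG : ContinuousAt G t₀) :
    ContinuousAt (fun t => Complex.arg (G t) - 2 * π * ⌊t - t₀⌋) t₀ := by
  have hre : ∀ᶠ t in 𝓝 t₀, (G t).re < 0 :=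
    (Complex.continuous_re.continuousAt.comp hG).eventually_lt continuousAt_const h.re_neg
  have hleft : ∀ᶠ t in 𝓝[<] t₀,
      Complex.arg (-G t) + π = Complex.arg (G t) - 2 * π * ⌊t - t₀⌋ := by
    filter_upwards [h.im_neg_left, Ioo_mem_nhdsLT (sub_one_lt t₀)] with t him ht
    have hfloor : ⌊t - t₀⌋ = -1 := by
      rw [Int.floor_eq_iff]
      constructor <;> push_cast <;> linarith [ht.1, ht.2]
    rw [Complex.arg_neg_eq_arg_add_pi_of_im_neg him, hfloor]
    push_cast
    ring
  have hright : ∀ᶠ t in 𝓝[≥] t₀,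
      Complex.arg (-G t) + π = Complex.arg (G t) - 2 * π * ⌊t - t₀⌋ := by
    filter_upwards [h.im_nonneg_right, nhdsWithin_le_nhds hre,
      Ico_mem_nhdsGE (lt_add_one t₀)] with t him hret ht
    have hfloor : ⌊t - t₀⌋ = 0 := by
      rw [Int.floor_eq_iff]
      constructor <;> push_cast <;> linarith [ht.1, ht.2]
    rw [Complex.arg_neg_eq_arg_sub_pi_iff.2 (him.lt_or_eq.imp id fun h0 => ⟨h0.symm, hret⟩), hfloor]
    push_cast
    ring
  have hslit : -G t₀ ∈ Complex.slitPlane := Or.inl (by simpa using h.re_neg)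
  have heq : ∀ᶠ t in 𝓝 t₀, Complex.arg (-G t) + π = Complex.arg (G t) - 2 * π * ⌊t - t₀⌋ := by
    rw [← nhdsLT_sup_nhdsGE, eventually_sup]
    exact ⟨hleft, hright⟩
  refine ContinuousAt.congr ?_ heq
  exact ((Complex.continuousAt_arg hslit).comp (f := fun t => -G t) hG.neg).add continuousAt_const

lemma continuousAt_floor_sub {a : ℝ} (h : ∀ n : ℤ, t₀ ≠ a + n) :
    ContinuousAt (fun t => (⌊t - a⌋ : ℝ)) t₀ := by
  have hlo : (⌊t₀ - a⌋ : ℝ) + a < t₀ :=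
    lt_of_le_of_ne (by linarith [Int.floor_le (t₀ - a)]) fun e => h ⌊t₀ - a⌋ (by linarith)
  have hhi : t₀ < ⌊t₀ - a⌋ + 1 + a := by linarith [Int.lt_floor_add_one (t₀ - a)]
  refine continuousAt_const.congr (f := fun _ => (⌊t₀ - a⌋ : ℝ)) ?_
  filter_upwards [Ioo_mem_nhds hlo hhi] with t ht
  have hfloor : ⌊t - a⌋ = ⌊t₀ - a⌋ := by
    rw [Int.floor_eq_iff]
    constructor <;> linarith [ht.1, ht.2]
  rw [hfloor]

lemma continuous_arg_sub_sum_floor {ι : Type*} [Fintype ι] {c : ι → ℝ} (hG : Continuous G)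
    (hc : ∀ i j (n : ℤ), c i = c j + n → i = j)
    (hslit : ∀ t, (∀ i (n : ℤ), t ≠ c i + n) → G t ∈ Complex.slitPlane)
    (hcut : ∀ i (n : ℤ), CrossesBranchCutUpward G (c i + n)) :
    Continuous fun t => Complex.arg (G t) - 2 * π * (∑ i, ⌊t - c i⌋ : ℤ) := by
  classical
  simp only [Int.cast_sum]
  refine continuous_iff_continuousAt.2 fun t₀ => ?_
  by_cases h : ∃ j, ∃ n : ℤ, t₀ = c j + n
  · obtain ⟨j, n, rfl⟩ := h
    have hne : ∀ i, i ≠ j → ∀ m : ℤ, c j + n ≠ c i + m := fun i hij m heq =>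
      hij (hc i j (n - m) (by push_cast; linarith))
    have hothers : ContinuousAt (fun t => ∑ i ∈ Finset.univ.erase j, (⌊t - c i⌋ : ℝ)) (c j + n) :=
      tendsto_finsetSum _ fun i hi => continuousAt_floor_sub (hne i (Finset.ne_of_mem_erase hi))
    refine (((hcut j n).continuousAt_arg_sub_floor hG.continuousAt).sub
      (continuousAt_const (y := 2 * π * n)) |>.sub
      (continuousAt_const (y := 2 * π) |>.mul hothers)).congr (.of_forall fun t => ?_)
    have hfloor : ⌊t - (c j + n)⌋ = ⌊t - c j⌋ - n := by rw [← sub_sub, Int.floor_sub_intCast]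
    simp only [Pi.sub_apply, Pi.mul_apply, hfloor]
    rw [← Finset.add_sum_erase _ _ (Finset.mem_univ j)]
    push_cast
    ring
  · push Not at h
    exact ((Complex.continuousAt_arg (hslit t₀ h)).comp hG.continuousAt).sub
      (continuousAt_const.mul (tendsto_finsetSum _ fun i _ => continuousAt_floor_sub (h i)))

end ArgLift

/-! ### The spiral with kinks -/

section SpiralCurve

open Real PlanarCurve

/-- The half-width of the time interval around `ℤ` in which the spiral leaves the unit circle. In
the rest of a period its angle grows by exactly half a turn. -/
def spiralWidth (k : ℕ) : ℝ := 1 / 2 - 1 / (4 * (k + 1))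

/-- The half-width of the time intervals of the `l` kinks; together they fit into the time that the
spiral spends on the unit circle. -/
def kinkWidth (k l : ℕ) : ℝ := 1 / (4 * (k + 1) * (l + 1))

/-- The time at which the `j`-th kink is halfway through. -/
def kinkCenter (k l : ℕ) (j : Fin l) : ℝ := spiralWidth k + (2 * j + 1) * kinkWidth k l

/-- The logarithm of the distance of `spiralCurve k l` from the origin. -/
def logRadius (k l : ℕ) (t : ℝ) : ℝ :=
  -bump (spiralWidth k) t + ∑ j, bump (kinkWidth k l) (t - kinkCenter k l j)

/-- The angle of `spiralCurve k l`, rescaled so that it grows by `1` in a period. -/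
def phase (k l : ℕ) (t : ℝ) : ℝ := t - ∑ j, backtrack (kinkWidth k l) (t - kinkCenter k l j)

/-- The angle of `spiralCurve k l`, which turns `k + 1` times in a period. -/
def angle (k l : ℕ) (t : ℝ) : ℝ := 2 * π * (k + 1) * phase k l t

/-- The curve `c_{ω,n}` with `k = (n + ω - 1)/2` and `l = (n - ω + 1)/2`, up to isotopy: a spiral
of `k + 1` turns that dips inside the unit circle and back, with `l` outward kinks on that
circle. -/
def spiralCurve (k l : ℕ) : ℝ → ℂ := polarCurve (logRadius k l) (angle k l)

/-- At time `t` the curve `spiralCurve k l` is in none of its kinks. -/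
def OffKinks (k l : ℕ) (t : ℝ) : Prop := ∀ j, bump (kinkWidth k l) (t - kinkCenter k l j) = 0

variable {k l : ℕ} {s t u v a : ℝ} {i j : Fin l}

lemma int_eq_zero_of_abs_cast_lt_one {n : ℤ} (h : |(n : ℝ)| < 1) : n = 0 :=
  Int.abs_lt_one_iff.1 (mod_cast h)

lemma add_one_mul_one_sub_two_mul_spiralWidth (k : ℕ) :
    ((k : ℝ) + 1) * (1 - 2 * spiralWidth k) = 1 / 2 := by
  unfold spiralWidth
  field_simp
  ring

lemma spiralWidth_lt_half (k : ℕ) : spiralWidth k < 1 / 2 :=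
  sub_lt_self _ (by positivity)

lemma spiralWidth_pos (k : ℕ) : 0 < spiralWidth k := by
  have h : 1 / (4 * ((k : ℝ) + 1)) ≤ 1 / 4 :=
    one_div_le_one_div_of_le (by norm_num) (by linarith [k.cast_nonneg (α := ℝ)])
  unfold spiralWidth
  linarith

lemma kinkWidth_pos (k l : ℕ) : 0 < kinkWidth k l := by
  unfold kinkWidth
  positivity

lemma two_mul_add_one_mul_kinkWidth (k l : ℕ) :
    2 * ((l : ℝ) + 1) * kinkWidth k l = 1 - 2 * spiralWidth k := by
  unfold kinkWidth spiralWidth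
  field_simp
  ring

lemma kinkWidth_le (k l : ℕ) : kinkWidth k l ≤ 1 / 4 :=
  one_div_le_one_div_of_le (by norm_num) <| by
    rw [mul_assoc, le_mul_iff_one_le_right (by norm_num)]
    exact one_le_mul_of_one_le_of_one_le (by simp) (by simp)

lemma spiralWidth_add_kinkWidth_le_kinkCenter (j : Fin l) :
    spiralWidth k + kinkWidth k l ≤ kinkCenter k l j := by
  unfold kinkCenter
  nlinarith [kinkWidth_pos k l, (j : ℕ).cast_nonneg (α := ℝ)]

lemma kinkCenter_le (j : Fin l) : kinkCenter k l j ≤ 1 - spiralWidth k - kinkWidth k l := by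
  have hj : (j : ℝ) + 1 ≤ l := mod_cast j.2
  unfold kinkCenter
  nlinarith [kinkWidth_pos k l, two_mul_add_one_mul_kinkWidth k l]

lemma kinkCenter_add_le_kinkCenter_sub (hij : i < j) :
    kinkCenter k l i + kinkWidth k l ≤ kinkCenter k l j - kinkWidth k l := by
  have h : (i : ℝ) + 1 ≤ j := mod_cast hij
  unfold kinkCenter
  nlinarith [kinkWidth_pos k l]

lemma strictMono_kinkCenter (k l : ℕ) : StrictMono (kinkCenter k l) := fun _ _ hij => by
  linarith [kinkCenter_add_le_kinkCenter_sub (k := k) hij, kinkWidth_pos k l]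

lemma two_mul_kinkWidth_le_abs_kinkCenter_sub (hij : i ≠ j) :
    2 * kinkWidth k l ≤ |kinkCenter k l i - kinkCenter k l j| := by
  rw [le_abs]
  rcases hij.lt_or_gt with h | h
  · exact .inr (by linarith [kinkCenter_add_le_kinkCenter_sub (k := k) h])
  · exact .inl (by linarith [kinkCenter_add_le_kinkCenter_sub (k := k) h])

lemma eq_of_abs_kinkCenter_sub_lt
    (h : |kinkCenter k l i - kinkCenter k l j| < 2 * kinkWidth k l) : i = j := by
  by_contra hij
  exact absurd (two_mul_kinkWidth_le_abs_kinkCenter_sub hij) h.not_ge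

lemma eq_of_kinkCenter_eq_add_int {n : ℤ} (h : kinkCenter k l i = kinkCenter k l j + n) :
    i = j := by
  have hw := spiralWidth_pos k
  have hε := kinkWidth_pos k l
  have hi := spiralWidth_add_kinkWidth_le_kinkCenter (k := k) i
  have hj := spiralWidth_add_kinkWidth_le_kinkCenter (k := k) j
  have hn : n = 0 := int_eq_zero_of_abs_cast_lt_one (abs_lt.2
    ⟨by linarith [kinkCenter_le (k := k) j], by linarith [kinkCenter_le (k := k) i]⟩)
  exact eq_of_abs_kinkCenter_sub_lt (k := k) (by simpa [h, hn] using hε)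

lemma kinkCenter_add_mem_Ioo (j : Fin l) (hu : |u| < kinkWidth k l) :
    kinkCenter k l j + u ∈ Ioo (spiralWidth k) (1 - spiralWidth k) := by
  have hlo := spiralWidth_add_kinkWidth_le_kinkCenter (k := k) j
  have hhi := kinkCenter_le (k := k) j
  obtain ⟨hu₁, hu₂⟩ := abs_lt.1 hu
  constructor <;> linarith

lemma bump_sub_kinkCenter_eq_zero (ht : t ∈ Ico 0 1)
    (h : kinkWidth k l ≤ |t - kinkCenter k l j|) :
    bump (kinkWidth k l) (t - kinkCenter k l j) = 0 := by
  have hlo := spiralWidth_add_kinkWidth_le_kinkCenter (k := k) j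
  have hhi := kinkCenter_le (k := k) j
  have hw := spiralWidth_pos k
  refine bump_eq_zero (kinkWidth_pos k l).le h (abs_le.2 ?_)
  constructor <;> linarith [ht.1, ht.2]

lemma offKinks_or_exists (ht : t ∈ Ico 0 1) :
    OffKinks k l t ∨ ∃ j u, |u| < kinkWidth k l ∧ t = kinkCenter k l j + u := by
  by_cases h : ∃ j, |t - kinkCenter k l j| < kinkWidth k l
  · obtain ⟨j, hj⟩ := h
    exact .inr ⟨j, _, hj, by ring⟩
  · push Not at h
    exact .inl fun j => bump_sub_kinkCenter_eq_zero ht (h j)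

lemma offKinks_of_notMem_Ioo (ht : t ∈ Ico 0 1)
    (h : t ∉ Ioo (spiralWidth k) (1 - spiralWidth k)) : OffKinks k l t := by
  rcases offKinks_or_exists (k := k) (l := l) ht with hoff | ⟨j, u, hu, rfl⟩
  · exact hoff
  · exact absurd (kinkCenter_add_mem_Ioo j hu) h

lemma bump_spiralWidth_eq_zero (ht : t ∈ Icc (spiralWidth k) (1 - spiralWidth k)) :
    bump (spiralWidth k) t = 0 := by
  have hw := spiralWidth_pos k
  have habs : |t| = t := abs_of_nonneg (hw.le.trans ht.1)
  exact bump_eq_zero hw.le (habs.symm ▸ ht.1) (habs.symm ▸ ht.2)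

lemma mem_Icc_of_bump_spiralWidth_eq_zero (ht : t ∈ Ico 0 1) (h : bump (spiralWidth k) t = 0) :
    t ∈ Icc (spiralWidth k) (1 - spiralWidth k) := by
  have hw := (spiralWidth_lt_half k).le
  constructor <;> by_contra! hlt
  · exact (bump_pos hw (abs_lt.2 ⟨by linarith [ht.1, spiralWidth_pos k], hlt⟩)).ne' h
  · rw [← (periodic_bump (spiralWidth k)).sub_eq] at h
    exact (bump_pos hw (abs_lt.2 ⟨by linarith, by linarith [ht.2, spiralWidth_pos k]⟩)).ne' h

lemma bump_kinkCenter_add_sub_eq_zero (hij : i ≠ j) (hu : |u| < kinkWidth k l) :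
    bump (kinkWidth k l) (kinkCenter k l j + u - kinkCenter k l i) = 0 := by
  have hw := spiralWidth_pos k
  have ht := kinkCenter_add_mem_Ioo j hu
  refine bump_sub_kinkCenter_eq_zero ⟨by linarith [ht.1], by linarith [ht.2]⟩ ?_
  have htri := abs_sub_abs_le_abs_sub (kinkCenter k l j - kinkCenter k l i) (-u)
  rw [abs_neg, sub_neg_eq_add, sub_add_eq_add_sub] at htri
  linarith [two_mul_kinkWidth_le_abs_kinkCenter_sub (k := k) hij.symm]

lemma logRadius_of_offKinks (h : OffKinks k l t) : logRadius k l t = -bump (spiralWidth k) t := by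
  rw [logRadius, Finset.sum_eq_zero fun j _ => h j, add_zero]

lemma phase_of_offKinks (h : OffKinks k l t) : phase k l t = t := by
  rw [phase, Finset.sum_eq_zero fun j _ => backtrack_eq_zero (h j), sub_zero]

lemma logRadius_kinkCenter_add (j : Fin l) (hu : |u| < kinkWidth k l) :
    logRadius k l (kinkCenter k l j + u) = bump (kinkWidth k l) u := by
  rw [logRadius, bump_spiralWidth_eq_zero (Ioo_subset_Icc_self (kinkCenter_add_mem_Ioo j hu)),
    Fintype.sum_eq_single j fun i hij => bump_kinkCenter_add_sub_eq_zero hij hu,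
    add_sub_cancel_left, neg_zero, zero_add]

lemma phase_kinkCenter_add (j : Fin l) (hu : |u| < kinkWidth k l) :
    phase k l (kinkCenter k l j + u) = kinkCenter k l j + kinkPhase (kinkWidth k l) u := by
  rw [phase, Fintype.sum_eq_single j fun i hij =>
    backtrack_eq_zero (bump_kinkCenter_add_sub_eq_zero hij hu), add_sub_cancel_left, kinkPhase,
    add_sub_assoc]

lemma contDiff_logRadius (k l : ℕ) : ContDiff ℝ (⊤ : ℕ∞) (logRadius k l) :=
  (contDiff_bump _).neg.add
    (.sum fun _ _ => (contDiff_bump _).comp (contDiff_id.sub contDiff_const))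

lemma contDiff_phase (k l : ℕ) : ContDiff ℝ (⊤ : ℕ∞) (phase k l) :=
  contDiff_id.sub (.sum fun _ _ => (contDiff_backtrack _).comp (contDiff_id.sub contDiff_const))

lemma contDiff_angle (k l : ℕ) : ContDiff ℝ (⊤ : ℕ∞) (angle k l) :=
  contDiff_const.mul (contDiff_phase k l)

lemma differentiable_logRadius (k l : ℕ) : Differentiable ℝ (logRadius k l) :=
  (contDiff_logRadius k l).differentiable (by simp)

lemma differentiable_angle (k l : ℕ) : Differentiable ℝ (angle k l) :=
  (contDiff_angle k l).differentiable (by simp)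

lemma periodic_logRadius (k l : ℕ) : Function.Periodic (logRadius k l) 1 := fun t => by
  simp only [logRadius, add_sub_right_comm t 1, periodic_bump _ _]

lemma phase_add_one (k l : ℕ) (t : ℝ) : phase k l (t + 1) = phase k l t + 1 := by
  simp only [phase, add_sub_right_comm t 1, periodic_backtrack _ _]

lemma angle_add_one (k l : ℕ) (t : ℝ) :
    angle k l (t + 1) = angle k l t + 2 * π * (k + 1 : ℤ) := by
  rw [angle, angle, phase_add_one]
  push_cast
  ring

lemma deriv_logRadius (k l : ℕ) (t : ℝ) : deriv (logRadius k l) t =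
    -deriv (bump (spiralWidth k)) t + ∑ j, deriv (bump (kinkWidth k l)) (t - kinkCenter k l j) :=
  ((hasDerivAt_bump _ t).neg.add
    (.fun_sum fun _ _ => (hasDerivAt_bump _ _).comp_sub_const t _)).deriv

lemma deriv_angle (k l : ℕ) (t : ℝ) : deriv (angle k l) t = 2 * π * (k + 1) *
    (1 - ∑ j, deriv (backtrack (kinkWidth k l)) (t - kinkCenter k l j)) :=
  (((hasDerivAt_id t).sub (.fun_sum fun _ _ =>
    (hasDerivAt_backtrack _ _).differentiableAt.hasDerivAt.comp_sub_const t _)).const_mul _).deriv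

lemma deriv_logRadius_of_offKinks (h : OffKinks k l t) :
    deriv (logRadius k l) t = -deriv (bump (spiralWidth k)) t := by
  rw [deriv_logRadius, Finset.sum_eq_zero fun j _ => deriv_bump_eq_zero (h j), add_zero]

lemma deriv_angle_of_offKinks (h : OffKinks k l t) : deriv (angle k l) t = 2 * π * (k + 1) := by
  rw [deriv_angle, Finset.sum_eq_zero fun j _ => deriv_backtrack_eq_zero (h j), sub_zero, mul_one]

lemma deriv_logRadius_kinkCenter_add (j : Fin l) (hu : |u| < kinkWidth k l) :
    deriv (logRadius k l) (kinkCenter k l j + u) = deriv (bump (kinkWidth k l)) u := by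
  have hw := bump_spiralWidth_eq_zero (Ioo_subset_Icc_self (kinkCenter_add_mem_Ioo j hu))
  rw [deriv_logRadius, deriv_bump_eq_zero hw, Fintype.sum_eq_single j fun i hij =>
    deriv_bump_eq_zero (bump_kinkCenter_add_sub_eq_zero hij hu), add_sub_cancel_left, neg_zero,
    zero_add]

lemma deriv_angle_kinkCenter_add (j : Fin l) (hu : |u| < kinkWidth k l) :
    deriv (angle k l) (kinkCenter k l j + u) =
      2 * π * (k + 1) * deriv (kinkPhase (kinkWidth k l)) u := by
  rw [deriv_angle, Fintype.sum_eq_single j fun i hij =>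
    deriv_backtrack_eq_zero (bump_kinkCenter_add_sub_eq_zero hij hu), add_sub_cancel_left,
    deriv_kinkPhase]

lemma spiralCurve_eq_iff : spiralCurve k l s = spiralCurve k l t ↔
    logRadius k l s = logRadius k l t ∧
      ∃ n : ℤ, (k + 1) * phase k l s = (k + 1) * phase k l t + n := by
  rw [spiralCurve, polarCurve_eq_iff]
  refine and_congr_right fun _ => exists_congr fun n => ?_
  rw [angle, angle, mul_assoc, mul_assoc (2 * π), ← mul_add, mul_right_inj' (by positivity)]

lemma periodic_spiralCurve (k l : ℕ) : Function.Periodic (spiralCurve k l) 1 :=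
  periodic_polarCurve (periodic_logRadius k l) (angle_add_one k l)

lemma periodic_polarVelocity (k l : ℕ) :
    Function.Periodic (polarVelocity (logRadius k l) (angle k l)) 1 := fun t => by
  have hangle : deriv (angle k l) (t + 1) = deriv (angle k l) t := by
    rw [← deriv_comp_add_const, funext (angle_add_one k l), deriv_add_const]
  rw [polarVelocity, periodic_deriv (periodic_logRadius k l), hangle, polarVelocity]

lemma polarVelocity_mem_slitPlane (ht : ∀ j (n : ℤ), t ≠ kinkCenter k l j + n) :
    polarVelocity (logRadius k l) (angle k l) t ∈ Complex.slitPlane := by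
  have hperiodic : polarVelocity (logRadius k l) (angle k l) (Int.fract t) =
      polarVelocity (logRadius k l) (angle k l) t := by
    rw [Int.fract, ← mul_one (⌊t⌋ : ℝ), (periodic_polarVelocity k l).sub_int_mul_eq]
  rw [← hperiodic, Complex.mem_slitPlane_iff, polarVelocity_re, polarVelocity_im]
  rcases offKinks_or_exists (k := k) (l := l) ⟨Int.fract_nonneg t, Int.fract_lt_one t⟩ with
    hoff | ⟨j, u, hu, hfract⟩
  · left
    rw [deriv_angle_of_offKinks hoff]
    positivity
  · right
    have hu0 : u ≠ 0 := by
      rintro rfl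
      exact ht j ⌊t⌋ (by rw [← add_zero (kinkCenter k l j), ← hfract, Int.fract_add_floor])
    rw [hfract, deriv_logRadius_kinkCenter_add j hu, neg_ne_zero]
    exact deriv_bump_ne_zero (by linarith [kinkWidth_le k l]) hu0 hu

lemma polarVelocity_eq_of_abs_sub_lt {n : ℤ} (ht : |t - (kinkCenter k l j + n)| < kinkWidth k l) :
    polarVelocity (logRadius k l) (angle k l) t =
      2 * π * (k + 1) * deriv (kinkPhase (kinkWidth k l)) (t - (kinkCenter k l j + n)) -
        deriv (bump (kinkWidth k l)) (t - (kinkCenter k l j + n)) * Complex.I := by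
  have hshift : polarVelocity (logRadius k l) (angle k l) t = polarVelocity (logRadius k l)
      (angle k l) (kinkCenter k l j + (t - (kinkCenter k l j + n))) := by
    rw [← ((periodic_polarVelocity k l).int_mul n) (kinkCenter k l j + _)]
    congr 1
    ring
  rw [hshift, polarVelocity, deriv_angle_kinkCenter_add j ht, deriv_logRadius_kinkCenter_add j ht]
  push_cast
  rfl

lemma crossesBranchCutUpward_polarVelocity (j : Fin l) (n : ℤ) :
    CrossesBranchCutUpward (polarVelocity (logRadius k l) (angle k l)) (kinkCenter k l j + n) := by
  have hε := kinkWidth_pos k l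
  have hε' : kinkWidth k l ≤ 1 / 2 := by linarith [kinkWidth_le k l]
  set c := kinkCenter k l j + n
  have hvel : ∀ {t}, |t - c| < kinkWidth k l → polarVelocity (logRadius k l) (angle k l) t = _ :=
    polarVelocity_eq_of_abs_sub_lt
  refine ⟨?_, ?_, ?_⟩
  · rw [hvel (by simpa using hε), sub_self]
    simpa using mul_neg_of_pos_of_neg (by positivity : 0 < 2 * π * ((k : ℝ) + 1))
      (deriv_kinkPhase_zero_neg hε (kinkWidth_le k l))
  · filter_upwards [Ioo_mem_nhdsLT (sub_lt_self c hε)] with t ht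
    rw [hvel (abs_lt.2 ⟨by linarith [ht.1], by linarith [ht.2]⟩), ← neg_sub c t, deriv_bump_neg]
    simpa using deriv_bump_lt_zero hε' (sub_pos.2 ht.2) (by linarith [ht.1])
  · filter_upwards [Ico_mem_nhdsGE (lt_add_of_pos_right c hε)] with t ht
    rw [hvel (abs_lt.2 ⟨by linarith [ht.1], by linarith [ht.2]⟩)]
    simpa using deriv_bump_nonpos hε' (sub_nonneg.2 ht.1) (by linarith [ht.2])

lemma polarVelocity_ne_zero (k l : ℕ) (t : ℝ) :
    polarVelocity (logRadius k l) (angle k l) t ≠ 0 := by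
  by_cases h : ∃ j, ∃ n : ℤ, t = kinkCenter k l j + n
  · obtain ⟨j, n, rfl⟩ := h
    intro h0
    exact (crossesBranchCutUpward_polarVelocity j n).re_neg.ne (by rw [h0, Complex.zero_re])
  · push Not at h
    exact Complex.slitPlane_ne_zero (polarVelocity_mem_slitPlane h)

/-- `spiralCurve k l` as a planar curve. -/
def spiralPlanarCurve (k l : ℕ) : PlanarCurve where
  toFun := spiralCurve k l
  periodic := periodic_spiralCurve k l
  smooth := contDiff_polarCurve (contDiff_logRadius k l) (contDiff_angle k l)
  immersion t := by
    rw [spiralCurve, deriv_polarCurve (differentiable_logRadius k l t) (differentiable_angle k l t)]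
    exact mul_ne_zero (Complex.exp_ne_zero _)
      (mul_ne_zero Complex.I_ne_zero (polarVelocity_ne_zero k l t))

lemma hasWhitney_spiralPlanarCurve (k l : ℕ) : (spiralPlanarCurve k l).HasWhitney (k + 1 - l) := by
  have hangle : angle k l 1 = angle k l 0 + 2 * π * (k + 1 : ℤ) := by
    rw [← angle_add_one, zero_add]
  have hturns : ∑ j, ⌊1 - kinkCenter k l j⌋ = ∑ j, ⌊0 - kinkCenter k l j⌋ + (l : ℤ) := by
    simp [sub_eq_neg_add, Finset.sum_add_distrib]
  exact hasWhitney_of_polarCurve rfl (differentiable_logRadius k l) (differentiable_angle k l)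
    (continuous_arg_sub_sum_floor (continuous_polarVelocity
        ((contDiff_logRadius k l).of_le (by simp)) ((contDiff_angle k l).of_le (by simp)))
      (fun _ _ _ => eq_of_kinkCenter_eq_add_int)
      (fun t => polarVelocity_mem_slitPlane) crossesBranchCutUpward_polarVelocity)
    hangle hturns (by simpa using periodic_polarVelocity k l 0)

/-- The first of the two parameters, symmetric about `1 / 2`, of the `i`-th self-crossing of the
spiral: the angle there is `(i + 1) * π`. -/
def spiralNode (k : ℕ) (i : Fin k) : ℝ := (i + 1) / (2 * (k + 1))

/-- The chords of the double points of `spiralCurve k l`, where each kink `u ↦ c + u` with centre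
`c` closes up at `u = ± a`. -/
def spiralChord (k l : ℕ) (a : ℝ) : Fin k ⊕ Fin l → ℝ × ℝ
  | .inl i => (spiralNode k i, 1 - spiralNode k i)
  | .inr j => (kinkCenter k l j - a, kinkCenter k l j + a)

lemma spiralNode_pos (i : Fin k) : 0 < spiralNode k i := by
  unfold spiralNode
  positivity

lemma spiralNode_lt_spiralWidth (i : Fin k) : spiralNode k i < spiralWidth k := by
  have hi : (i : ℝ) + 1 ≤ k := mod_cast i.2
  unfold spiralNode spiralWidth
  rw [div_lt_iff₀ (by positivity)]
  field_simp
  linarith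

lemma two_mul_add_one_mul_spiralNode (i : Fin k) : 2 * (k + 1) * spiralNode k i = i + 1 := by
  unfold spiralNode
  field_simp

lemma strictMono_spiralNode (k : ℕ) : StrictMono (spiralNode k) := fun i j hij => by
  have h : (i : ℝ) < j := mod_cast hij
  unfold spiralNode
  gcongr

lemma offKinks_spiralNode (i : Fin k) : OffKinks k l (spiralNode k i) := by
  have hpos := spiralNode_pos i
  have hlt := spiralNode_lt_spiralWidth i
  exact offKinks_of_notMem_Ioo ⟨hpos.le, by linarith [spiralWidth_lt_half k]⟩
    fun h => by linarith [h.1]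

lemma offKinks_one_sub_spiralNode (i : Fin k) : OffKinks k l (1 - spiralNode k i) := by
  have hpos := spiralNode_pos i
  have hlt := spiralNode_lt_spiralWidth i
  exact offKinks_of_notMem_Ioo ⟨by linarith [spiralWidth_lt_half k], by linarith⟩
    fun h => by linarith [h.2]

lemma spiralCurve_spiralNode (i : Fin k) :
    spiralCurve k l (spiralNode k i) = spiralCurve k l (1 - spiralNode k i) := by
  rw [spiralCurve_eq_iff, logRadius_of_offKinks (offKinks_spiralNode i),
    logRadius_of_offKinks (offKinks_one_sub_spiralNode i),
    phase_of_offKinks (offKinks_spiralNode i), phase_of_offKinks (offKinks_one_sub_spiralNode i),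
    (periodic_bump _).sub_eq', bump_neg]
  refine ⟨rfl, i - k, ?_⟩
  push_cast
  linarith [two_mul_add_one_mul_spiralNode i]

lemma spiralCurve_kinkCenter_sub (ha : a ∈ Ioo 0 (kinkWidth k l))
    (ha0 : kinkPhase (kinkWidth k l) a = 0) (j : Fin l) :
    spiralCurve k l (kinkCenter k l j - a) = spiralCurve k l (kinkCenter k l j + a) := by
  have habs : |a| < kinkWidth k l := abs_lt.2 ⟨by linarith [ha.1, ha.2], ha.2⟩
  have habs' : |-a| < kinkWidth k l := by rwa [abs_neg]
  rw [spiralCurve_eq_iff, sub_eq_add_neg, logRadius_kinkCenter_add j habs,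
    logRadius_kinkCenter_add j habs', phase_kinkCenter_add j habs, phase_kinkCenter_add j habs',
    bump_neg, kinkPhase_neg, ha0, neg_zero]
  exact ⟨rfl, 0, by simp⟩

lemma eq_of_add_one_mul_eq_add_int {x y : ℝ} {n : ℤ}
    (hx : x ∈ Icc (spiralWidth k) (1 - spiralWidth k))
    (hy : y ∈ Icc (spiralWidth k) (1 - spiralWidth k)) (h : (k + 1) * x = (k + 1) * y + n) :
    x = y := by
  have hw := add_one_mul_one_sub_two_mul_spiralWidth k
  have hk : 0 < (k : ℝ) + 1 := by positivity
  have hn : n = 0 := int_eq_zero_of_abs_cast_lt_one (abs_lt.2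
    ⟨by nlinarith [hx.1, hy.2], by nlinarith [hx.2, hy.1]⟩)
  rw [hn, Int.cast_zero, add_zero] at h
  exact mul_left_cancel₀ hk.ne' h

lemma exists_eq_spiralNode {n : ℤ} (hs : 0 < s) (hs' : s < 1 / 2) (hn : 2 * (k + 1) * s = n) :
    ∃ i, s = spiralNode k i := by
  have hk : 0 < 2 * ((k : ℝ) + 1) := by positivity
  have hpos : 0 < n := by
    exact_mod_cast (by rw [← hn]; positivity : (0 : ℝ) < n)
  have hlt : n < k + 1 := by
    exact_mod_cast (by rw [← hn]; nlinarith : (n : ℝ) < k + 1)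
  have hcast : ((n - 1).toNat : ℝ) = n - 1 := mod_cast Int.toNat_of_nonneg (by lia : 0 ≤ n - 1)
  refine ⟨⟨(n - 1).toNat, by lia⟩, mul_left_cancel₀ hk.ne' ?_⟩
  rw [hn, two_mul_add_one_mul_spiralNode, hcast, sub_add_cancel]

lemma exists_spiralNode_of_offKinks (hs : s ∈ Ico 0 1) (ht : t ∈ Ico 0 1) (hst : s < t)
    (hs_off : OffKinks k l s) (ht_off : OffKinks k l t)
    (h : spiralCurve k l s = spiralCurve k l t) :
    ∃ i, s = spiralNode k i ∧ t = 1 - spiralNode k i := by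
  rw [spiralCurve_eq_iff, logRadius_of_offKinks hs_off, logRadius_of_offKinks ht_off,
    phase_of_offKinks hs_off, phase_of_offKinks ht_off, neg_inj] at h
  obtain ⟨hbump, n, hn⟩ := h
  have hpos : 0 < bump (spiralWidth k) s := by
    refine (bump_nonneg _ s).lt_of_ne' fun hzero => hst.ne ?_
    exact eq_of_add_one_mul_eq_add_int (mem_Icc_of_bump_spiralWidth_eq_zero hs hzero)
      (mem_Icc_of_bump_spiralWidth_eq_zero ht (hbump ▸ hzero)) hn
  obtain ⟨m, rfl | rfl⟩ := exists_int_of_bump_eq hbump hpos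
  · have hm : m = 0 := int_eq_zero_of_abs_cast_lt_one
      (abs_lt.2 ⟨by linarith [hs.2, ht.1], by linarith [hs.1, ht.2]⟩)
    simp [hm] at hst
  · have hm : m = 1 := by
      have hm₀ : 0 < m := by exact_mod_cast (by linarith [hs.1] : (0 : ℝ) < m)
      have hm₂ : m < 2 := by exact_mod_cast (by linarith [hs.2, ht.2] : (m : ℝ) < 2)
      lia
    rw [hm, Int.cast_one] at hn ht hst ⊢
    obtain ⟨i, hi⟩ := exists_eq_spiralNode (k := k) (n := n + (k + 1)) (s := s)
      (by linarith [ht.2]) (by linarith) (by push_cast; linarith)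
    exact ⟨i, hi, by rw [hi]⟩

lemma spiralCurve_ne_spiralCurve_kinkCenter_add (hs : OffKinks k l s) (hu : |u| < kinkWidth k l) :
    spiralCurve k l s ≠ spiralCurve k l (kinkCenter k l j + u) := fun h => by
  have hradius := (spiralCurve_eq_iff.1 h).1
  rw [logRadius_of_offKinks hs, logRadius_kinkCenter_add j hu] at hradius
  linarith [bump_nonneg (spiralWidth k) s, bump_pos (by linarith [kinkWidth_le k l]) hu]

lemma eq_of_spiralCurve_kinkCenter_add_eq (ha : a ∈ Ioo 0 (kinkWidth k l))
    (ha0 : kinkPhase (kinkWidth k l) a = 0)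
    (hu : |u| < kinkWidth k l) (hv : |v| < kinkWidth k l)
    (hst : kinkCenter k l i + u < kinkCenter k l j + v)
    (h : spiralCurve k l (kinkCenter k l i + u) = spiralCurve k l (kinkCenter k l j + v)) :
    i = j ∧ u = -a ∧ v = a := by
  rw [spiralCurve_eq_iff, logRadius_kinkCenter_add i hu, logRadius_kinkCenter_add j hv,
    phase_kinkCenter_add i hu, phase_kinkCenter_add j hv] at h
  obtain ⟨hbump, n, hn⟩ := h
  have hε := kinkWidth_le k l
  have hkink_u := abs_kinkPhase_lt hε hu
  have hkink_v := abs_kinkPhase_lt hε hv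
  have hphase := eq_of_add_one_mul_eq_add_int
    (Ioo_subset_Icc_self (kinkCenter_add_mem_Ioo i hkink_u))
    (Ioo_subset_Icc_self (kinkCenter_add_mem_Ioo j hkink_v)) hn
  rw [abs_lt] at hu hv hkink_u hkink_v
  have hij : i = j := eq_of_abs_kinkCenter_sub_lt (k := k) (abs_lt.2 ⟨by linarith, by linarith⟩)
  subst hij
  have hint : ∀ m : ℤ, |(m : ℝ)| < 1 → m = 0 := fun m => int_eq_zero_of_abs_cast_lt_one
  obtain ⟨m, rfl | rfl⟩ := exists_int_of_bump_eq hbump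
    (bump_pos (by linarith) (abs_lt.2 hu))
  · have hm : m = 0 := hint m (abs_lt.2 ⟨by linarith, by linarith⟩)
    simp [hm] at hst
  · have hm : m = 0 := hint m (abs_lt.2 ⟨by linarith, by linarith⟩)
    rw [hm, Int.cast_zero, zero_sub] at hst hphase hv ⊢
    rw [kinkPhase_neg] at hphase
    have hua : -u = a := eq_of_kinkPhase_eq_zero hε ⟨by linarith, hv.2⟩ ha
      (by rw [kinkPhase_neg]; linarith) ha0
    exact ⟨rfl, by linarith, hua⟩

lemma crossingPairs_spiralCurve (ha : a ∈ Ioo 0 (kinkWidth k l))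
    (ha0 : kinkPhase (kinkWidth k l) a = 0) :
    crossingPairsF (spiralCurve k l) = range (spiralChord k l a) := by
  refine Subset.antisymm ?_ (range_subset_iff.2 ?_)
  · rintro ⟨s, t⟩ ⟨hs, ht, hst, h⟩
    dsimp only at hs ht hst h
    rcases offKinks_or_exists (k := k) (l := l) hs with hs_off | ⟨i, u, hu, rfl⟩ <;>
      rcases offKinks_or_exists (k := k) (l := l) ht with ht_off | ⟨j, v, hv, rfl⟩
    · obtain ⟨i, rfl, rfl⟩ := exists_spiralNode_of_offKinks hs ht hst hs_off ht_off h
      exact ⟨.inl i, rfl⟩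
    · exact absurd h (spiralCurve_ne_spiralCurve_kinkCenter_add hs_off hv)
    · exact absurd h.symm (spiralCurve_ne_spiralCurve_kinkCenter_add ht_off hu)
    · obtain ⟨rfl, rfl, rfl⟩ := eq_of_spiralCurve_kinkCenter_add_eq ha ha0 hu hv hst h
      exact ⟨.inr i, by rw [spiralChord, sub_eq_add_neg]⟩
  · rintro (i | j)
    · have hpos := spiralNode_pos i
      have hlt := (spiralNode_lt_spiralWidth i).trans (spiralWidth_lt_half k)
      refine ⟨⟨?_, ?_⟩, ⟨?_, ?_⟩, ?_, spiralCurve_spiralNode i⟩ <;> dsimp only [spiralChord] <;>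
        linarith
    · have hlo := spiralWidth_add_kinkWidth_le_kinkCenter (k := k) j
      have hhi := kinkCenter_le (k := k) j
      have hw := spiralWidth_pos k
      refine ⟨⟨?_, ?_⟩, ⟨?_, ?_⟩, ?_, spiralCurve_kinkCenter_sub ha ha0 j⟩ <;>
        dsimp only [spiralChord] <;> linarith [ha.1, ha.2]

lemma det2_deriv_spiralNode_pos (i : Fin k) :
    0 < det2 (deriv (spiralCurve k l) (spiralNode k i))
      (deriv (spiralCurve k l) (1 - spiralNode k i)) := by
  refine det2_deriv_polarCurve_pos (differentiable_logRadius k l) (differentiable_angle k l)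
    (spiralCurve_spiralNode i) ?_
  have hslope := deriv_bump_lt_zero (spiralWidth_lt_half k).le (spiralNode_pos i)
    (spiralNode_lt_spiralWidth i)
  rw [deriv_logRadius_of_offKinks (offKinks_spiralNode i),
    deriv_logRadius_of_offKinks (offKinks_one_sub_spiralNode i),
    deriv_angle_of_offKinks (offKinks_spiralNode i),
    deriv_angle_of_offKinks (offKinks_one_sub_spiralNode i),
    (periodic_deriv (periodic_bump _)).sub_eq', deriv_bump_neg, mul_comm, ← mul_sub]
  exact mul_pos (by positivity) (by linarith)

lemma det2_deriv_kinkCenter_pos (ha : a ∈ Ioo 0 (kinkWidth k l))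
    (ha0 : kinkPhase (kinkWidth k l) a = 0) (j : Fin l) :
    0 < det2 (deriv (spiralCurve k l) (kinkCenter k l j - a))
      (deriv (spiralCurve k l) (kinkCenter k l j + a)) := by
  refine det2_deriv_polarCurve_pos (differentiable_logRadius k l) (differentiable_angle k l)
    (spiralCurve_kinkCenter_sub ha ha0 j) ?_
  have habs : |a| < kinkWidth k l := abs_lt.2 ⟨by linarith [ha.1, ha.2], ha.2⟩
  have habs' : |-a| < kinkWidth k l := by rwa [abs_neg]
  have hslope := deriv_bump_lt_zero (by linarith [kinkWidth_le k l]) ha.1 ha.2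
  have hphase := deriv_kinkPhase_pos (kinkWidth_le k l) ha ha0
  rw [sub_eq_add_neg (kinkCenter k l j), deriv_logRadius_kinkCenter_add j habs,
    deriv_logRadius_kinkCenter_add j habs', deriv_angle_kinkCenter_add j habs,
    deriv_angle_kinkCenter_add j habs', deriv_bump_neg, deriv_kinkPhase_neg, mul_comm, ← mul_sub]
  exact mul_pos (by positivity) (by linarith)

lemma spiralNode_lt_kinkCenter_sub (ha : a < kinkWidth k l) (i : Fin k) (j : Fin l) :
    spiralNode k i < kinkCenter k l j - a := by
  linarith [spiralNode_lt_spiralWidth i, spiralWidth_add_kinkWidth_le_kinkCenter (k := k) j]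

lemma kinkCenter_add_lt_one_sub_spiralNode (ha : a < kinkWidth k l) (i : Fin k) (j : Fin l) :
    kinkCenter k l j + a < 1 - spiralNode k i := by
  linarith [spiralNode_lt_spiralWidth i, kinkCenter_le (k := k) j]

lemma kinkCenter_add_lt_kinkCenter_sub_iff (ha : a ∈ Ioo 0 (kinkWidth k l)) :
    kinkCenter k l i + a < kinkCenter k l j - a ↔ i < j := by
  refine ⟨fun h => ?_, fun h => ?_⟩
  · by_contra! hji
    linarith [(strictMono_kinkCenter k l).monotone hji, ha.1]
  · linarith [kinkCenter_add_le_kinkCenter_sub (k := k) h, ha.2]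

lemma injective_spiralChord (ha : a ∈ Ioo 0 (kinkWidth k l)) :
    Function.Injective (spiralChord k l a) := by
  rintro (i | i) (j | j) h <;> rw [spiralChord, spiralChord, Prod.mk.injEq] at h
  · rw [(strictMono_spiralNode k).injective h.1]
  · exact absurd h.1 (spiralNode_lt_kinkCenter_sub ha.2 i j).ne
  · exact absurd h.1 (spiralNode_lt_kinkCenter_sub ha.2 j i).ne'
  · rw [(strictMono_kinkCenter k l).injective (sub_left_injective h.1)]

lemma positiveGaussDiagram_spiralCurve (ha : a ∈ Ioo 0 (kinkWidth k l))
    (ha0 : kinkPhase (kinkWidth k l) a = 0) :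
    PositiveGaussDiagram (spiralCurve k l) (spiralChord k l a) where
  injective := injective_spiralChord ha
  crossingPairs_eq := crossingPairs_spiralCurve ha ha0
  det2_pos
    | .inl i => det2_deriv_spiralNode_pos i
    | .inr j => det2_deriv_kinkCenter_pos ha ha0 j
  snd_ne_fst
    | .inl i, .inl j => by
      have hi := spiralNode_lt_spiralWidth i
      have hj := spiralNode_lt_spiralWidth j
      have hw := spiralWidth_lt_half k
      exact (show spiralNode k j < 1 - spiralNode k i by linarith).ne'
    | .inl i, .inr j => by
      have h := kinkCenter_add_lt_one_sub_spiralNode ha.2 i j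
      exact (show kinkCenter k l j - a < 1 - spiralNode k i by linarith [ha.1]).ne'
    | .inr i, .inl j => by
      have h := spiralNode_lt_kinkCenter_sub ha.2 j i
      exact (show spiralNode k j < kinkCenter k l i + a by linarith [ha.1]).ne'
    | .inr i, .inr j => by
      rcases lt_or_ge i j with hij | hji
      · exact ((kinkCenter_add_lt_kinkCenter_sub_iff ha).2 hij).ne
      · have h := (strictMono_kinkCenter k l).monotone hji
        exact (show kinkCenter k l j - a < kinkCenter k l i + a by linarith [ha.1]).ne'

open scoped Finset

lemma card_filter_sum_eq_add {α β : Type*} [Fintype α] [Fintype β] {p : α ⊕ β → Prop}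
    {pα : α → Prop} {pβ : β → Prop} [DecidablePred p] [DecidablePred pα] [DecidablePred pβ]
    (hα : ∀ a, p (.inl a) ↔ pα a) (hβ : ∀ b, p (.inr b) ↔ pβ b) :
    #{x | p x} = #{a | pα a} + #{b | pβ b} := by
  simp only [Finset.card_filter, Fintype.sum_sum_type, hα, hβ]

lemma chordIndices_spiralChord_inl (ha : a ∈ Ioo 0 (kinkWidth k l)) (i : Fin k) :
    chordIndices (spiralChord k l a) (.inl i) = ((l : ℤ) + (k - 1 - i : ℕ), -(i : ℤ)) := by
  have hnode : ∀ j, spiralNode k j < 1 / 2 := fun j =>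
    (spiralNode_lt_spiralWidth j).trans (spiralWidth_lt_half k)
  have hlt : ∀ {j j'}, spiralNode k j < spiralNode k j' ↔ j < j' :=
    (strictMono_spiralNode k).lt_iff_lt
  have hleft := fun j => spiralNode_lt_kinkCenter_sub ha.2 i j
  have hright := fun j => kinkCenter_add_lt_one_sub_spiralNode ha.2 i j
  set q := spiralChord k l a
  have nested : #{x | (q (.inl i)).1 < (q x).1 ∧ (q x).2 < (q (.inl i)).2} = (k - 1 - i) + l := by
    rw [card_filter_sum_eq_add (pα := (i < ·)) (pβ := fun _ => True)]
    · rw [Finset.filter_lt_eq_Ioi, Fin.card_Ioi, Finset.filter_true, Finset.card_fin]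
    · exact fun j => ⟨fun h => hlt.1 h.1, fun h => ⟨hlt.2 h, sub_lt_sub_left (hlt.2 h) 1⟩⟩
    · exact fun j => iff_true_intro ⟨hleft j, hright j⟩
  have after : #{x | (q (.inl i)).2 < (q x).1} = 0 := by
    refine Finset.card_eq_zero.2 (Finset.filter_eq_empty_iff.2 ?_)
    rintro (j | j) - <;> simp only [q, spiralChord, not_lt]
    · linarith [hnode i, hnode j]
    · linarith [hright j, ha.1]
  have before : #{x | (q x).2 < (q (.inl i)).1} = 0 := by
    refine Finset.card_eq_zero.2 (Finset.filter_eq_empty_iff.2 ?_)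
    rintro (j | j) - <;> simp only [q, spiralChord, not_lt]
    · linarith [hnode i, hnode j]
    · linarith [hleft j, ha.1]
  have enclosing : #{x | (q x).1 < (q (.inl i)).1 ∧ (q (.inl i)).2 < (q x).2} = i := by
    rw [card_filter_sum_eq_add (pα := (· < i)) (pβ := fun _ => False)]
    · rw [Finset.filter_gt_eq_Iio, Fin.card_Iio, Finset.filter_false, Finset.card_empty, add_zero]
    · exact fun j => ⟨fun h => hlt.1 h.1, fun h => ⟨hlt.2 h, sub_lt_sub_left (hlt.2 h) 1⟩⟩
    · exact fun j => iff_false_intro fun h => (hleft j).not_gt h.1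
  rw [chordIndices, nested, after, before, enclosing]
  ext <;> push_cast <;> ring

lemma chordIndices_spiralChord_inr (ha : a ∈ Ioo 0 (kinkWidth k l)) (i : Fin l) :
    chordIndices (spiralChord k l a) (.inr i) = (0, (l : ℤ) - 1 - k) := by
  have hleft := fun j => spiralNode_lt_kinkCenter_sub ha.2 j i
  have hright := fun j => kinkCenter_add_lt_one_sub_spiralNode ha.2 j i
  set q := spiralChord k l a
  have nested : #{x | (q (.inr i)).1 < (q x).1 ∧ (q x).2 < (q (.inr i)).2} = 0 := by
    refine Finset.card_eq_zero.2 (Finset.filter_eq_empty_iff.2 ?_)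
    rintro (j | j) - ⟨h₁, h₂⟩ <;> dsimp only [q, spiralChord] at h₁ h₂
    · linarith [hleft j]
    · linarith
  have after : #{x | (q (.inr i)).2 < (q x).1} = l - 1 - i := by
    rw [card_filter_sum_eq_add (pα := fun _ => False) (pβ := (i < ·))]
    · rw [Finset.filter_lt_eq_Ioi, Fin.card_Ioi, Finset.filter_false, Finset.card_empty, zero_add]
    · exact fun j => iff_false_intro fun h => by
        dsimp only [q, spiralChord] at h
        linarith [hleft j, ha.1]
    · exact fun j => kinkCenter_add_lt_kinkCenter_sub_iff ha
  have before : #{x | (q x).2 < (q (.inr i)).1} = i := by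
    rw [card_filter_sum_eq_add (pα := fun _ => False) (pβ := (· < i))]
    · rw [Finset.filter_gt_eq_Iio, Fin.card_Iio, Finset.filter_false, Finset.card_empty, zero_add]
    · exact fun j => iff_false_intro fun h => by
        dsimp only [q, spiralChord] at h
        linarith [hright j, ha.1]
    · exact fun j => kinkCenter_add_lt_kinkCenter_sub_iff ha
  have enclosing : #{x | (q x).1 < (q (.inr i)).1 ∧ (q (.inr i)).2 < (q x).2} = k := by
    rw [card_filter_sum_eq_add (pα := fun _ => True) (pβ := fun _ => False)]
    · rw [Finset.filter_true, Finset.filter_false, Finset.card_fin, Finset.card_empty, add_zero]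
    · exact fun j => iff_true_intro ⟨hleft j, hright j⟩
    · exact fun j => iff_false_intro fun h => by
        dsimp only [q, spiralChord] at h
        linarith [h.1, h.2]
  rw [chordIndices, nested, after, before, enclosing]
  rw [Nat.sub_sub, Nat.cast_sub (Nat.one_add_le_iff.2 i.2)]
  ext
  · simp
  · push_cast
    ring

lemma fX_eq_of_positiveGaussDiagram_spiralChord {c : PlanarCurve} (ha : a ∈ Ioo 0 (kinkWidth k l))
    (hc : PositiveGaussDiagram c.toFun (spiralChord k l a)) :
    fX c = ∑ i ∈ Finset.range k, FreeAbelianGroup.of ((l + i : ℤ), ((i : ℤ) + 1 - k)) +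
      (l : ℤ) • FreeAbelianGroup.of ((0 : ℤ), (l : ℤ) - 1 - k) := by
  rw [hc.fX_eq_sum, Fintype.sum_sum_type]
  congr 1
  · rw [← Finset.sum_range_reflect, ← Fin.sum_univ_eq_sum_range fun i =>
      FreeAbelianGroup.of ((l + (k - 1 - i : ℕ) : ℤ), (((k - 1 - i : ℕ) : ℤ) + 1 - k))]
    refine Finset.sum_congr rfl fun i _ => ?_
    rw [chordIndices_spiralChord_inl ha, Nat.sub_sub, Nat.cast_sub (Nat.one_add_le_iff.2 i.2)]
    congr 2
    push_cast
    ring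
  · simp_rw [chordIndices_spiralChord_inr ha]
    simp

lemma phi_sum_range_add_zsmul (k : ℕ) (l : ℤ) :
    phi (∑ i ∈ Finset.range k, FreeAbelianGroup.of ((l + i : ℤ), ((i : ℤ) + 1 - k)) +
      l • FreeAbelianGroup.of ((0 : ℤ), l - 1 - k)) = k * (l + k - 1) + l * (k - l + 1) := by
  simp only [map_add, map_sum, map_zsmul, phi, FreeAbelianGroup.lift_apply_of, smul_eq_mul]
  have hterm : ∀ i ∈ Finset.range k, (l + i : ℤ) - (i + 1 - k) = l + k - 1 := fun i _ => by ring
  rw [Finset.sum_congr rfl hterm, Finset.sum_const, Finset.card_range, nsmul_eq_mul]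
  ring

lemma exists_planarCurve_fX (k l : ℕ) : ∃ c : PlanarCurve, c.Stable ∧ c.crossings = k + l ∧
    c.HasWhitney (k + 1 - l) ∧
    fX c = ∑ i ∈ Finset.range k, FreeAbelianGroup.of ((l + i : ℤ), ((i : ℤ) + 1 - k)) +
      (l : ℤ) • FreeAbelianGroup.of ((0 : ℤ), (l : ℤ) - 1 - k) := by
  obtain ⟨a, ha, ha0⟩ := exists_kinkPhase_eq_zero (kinkWidth_pos k l) (kinkWidth_le k l)
  have hdiagram : PositiveGaussDiagram (spiralPlanarCurve k l).toFun (spiralChord k l a) :=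
    positiveGaussDiagram_spiralCurve ha ha0
  refine ⟨spiralPlanarCurve k l, hdiagram.stable, ?_, hasWhitney_spiralPlanarCurve k l,
    fX_eq_of_positiveGaussDiagram_spiralChord ha hdiagram⟩
  rw [crossings, hdiagram.ncard_crossingSet, Fintype.card_sum, Fintype.card_fin, Fintype.card_fin]

end SpiralCurve

theorem statement16_general (ω n : ℤ) (hω : ω ≤ n + 1) (hn : 1 ≤ n + ω) (hpar : Odd (n + ω))
    (k l : ℤ) (hk : k = (n + ω - 1) / 2) (hl : l = (n - ω + 1) / 2) :
    ∃ c : PlanarCurve, c.Stable ∧ (c.crossings : ℤ) = n ∧ c.HasWhitney ω ∧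
      PlanarCurve.fX c =
        (∑ i ∈ Finset.range k.toNat,
          FreeAbelianGroup.of ((l + i : ℤ), ((i : ℤ) + 1 - k))) +
        l • FreeAbelianGroup.of ((0 : ℤ), l - 1 - k) ∧
      PlanarCurve.g c = k * (l + k - 1) + l * (k - l + 1) ∧
      (PlanarCurve.g c : ℚ) =
        1 / 2 * (n : ℚ) ^ 2 + ((ω : ℚ) - 1) * n + 1 / 2 * (1 - (ω : ℚ) ^ 2) := by
  obtain ⟨r, hr⟩ := hpar
  obtain ⟨k, rfl⟩ := Int.eq_ofNat_of_zero_le (by lia : 0 ≤ k)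
  obtain ⟨l, rfl⟩ := Int.eq_ofNat_of_zero_le (by lia : 0 ≤ l)
  obtain rfl : n = k + l := by lia
  obtain rfl : ω = k + 1 - l := by lia
  obtain ⟨c, hstable, hcrossings, hwhitney, hfX⟩ := exists_planarCurve_fX k l
  have hg : PlanarCurve.g c = k * (l + k - 1) + l * (k - l + 1) := by
    rw [PlanarCurve.g, hfX, phi_sum_range_add_zsmul]
  refine ⟨c, hstable, by exact_mod_cast hcrossings, hwhitney, hfX, hg, ?_⟩
  rw [hg]
  push_cast
  ring

/-- For integers `n ≥ ω ≥ 0` of opposite parity, with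
`k = (n + ω - 1)/2` and `l = (n - ω + 1)/2`, the invariant `g = φ ∘ f^X` of the curve
`c_{ω,n}` equals `k(l + k - 1) + l(k - l + 1) = (1/2)n² + (ω - 1)n + (1/2)(1 - ω²)`. -/
theorem statement16 (ω n : ℤ) (h0 : 0 ≤ ω) (hn : ω ≤ n) (hpar : Odd (n + ω))
    (k l : ℤ) (hk : k = (n + ω - 1) / 2) (hl : l = (n - ω + 1) / 2) :
    ∃ c : PlanarCurve, c.Stable ∧ (c.crossings : ℤ) = n ∧ c.HasWhitney ω ∧
      PlanarCurve.fX c =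
        (∑ i ∈ Finset.range k.toNat,
          FreeAbelianGroup.of ((l + i : ℤ), ((i : ℤ) + 1 - k))) +
        l • FreeAbelianGroup.of ((0 : ℤ), l - 1 - k) ∧
      PlanarCurve.g c = k * (l + k - 1) + l * (k - l + 1) ∧
      (PlanarCurve.g c : ℚ) =
        1 / 2 * (n : ℚ) ^ 2 + ((ω : ℚ) - 1) * n + 1 / 2 * (1 - (ω : ℚ) ^ 2) := by
  exact statement16_general ω n (by lia) (by obtain ⟨r, hr⟩ := hpar; lia) hpar k l hk hl

end CurvePaper
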